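/- Suppose M is contractive with contraction rate 0 < a < 1, uniformly continuous, non-degenerate, with b < ∞, and has a dominating Markov chain. Then E(M) is nonempty if and only if there exists x_0 ∈ K at which Condition (T) holds. -/

import Mathlib

open MeasureTheory Filter Topology
open scoped ENNReal NNReal Classical

noncomputable section

/-- A countable Markov system `(K_{i(e)}, w_e, p_e)_{e ∈ E}` on a metric space `K`:
a partition `(K_j)_{j ∈ N}` of `K` into nonempty Borel sets, source and target maps
`i, t : E → N` (`i` surjective), and for each `e ∈ E` Borel maps `w_e` and probability
functions `p_e` (extended by zero outside `K_{i(e)}`) with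
`∑_{e, i(e)=j} p_e(y) = 1` for `y ∈ K_j`. -/
structure MarkovSystem (K : Type*) [MetricSpace K] [MeasurableSpace K]
    (N : Type*) (E : Type*) where
  Kset : N → Set K
  Kset_nonempty : ∀ j, (Kset j).Nonempty
  Kset_measurable : ∀ j, MeasurableSet (Kset j)
  Kset_disjoint : Pairwise (Function.onFun Disjoint Kset)
  Kset_cover : (⋃ j, Kset j) = Set.univ
  i : E → N
  t : E → N
  i_surj : Function.Surjective i
  w : E → K → K
  p : E → K → ℝ
  w_measurable : ∀ e, Measurable (w e)
  p_measurable : ∀ e, Measurable (p e)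
  p_nonneg : ∀ e x, 0 ≤ p e x
  p_le_one : ∀ e x, p e x ≤ 1
  p_zero_outside : ∀ e x, x ∉ Kset (i e) → p e x = 0
  w_mapsTo : ∀ e, Set.MapsTo (w e) (Kset (i e)) (Kset (t e))
  p_pos_somewhere : ∀ e, ∃ x ∈ Kset (i e), 0 < p e x
  p_tsum_one : ∀ j, ∀ x ∈ Kset j, (∑' e : {e : E // i e = j}, p e.val x) = 1

/-- `Ē = E ∪ {∞}` (one-point compactification); with `E` countable its Borel σ-algebra
consists of all subsets. -/
instance optionMeasurableSpace (E : Type*) : MeasurableSpace (Option E) := ⊤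

/-- The code space `Σ̄ = Ē^ℤ`, carrying the product σ-algebra. -/
abbrev CodeSpace (E : Type*) : Type _ := ℤ → Option E

/-- The left shift `S` on the code space, `(Sσ)_{k-1} = σ_k`. -/
def shiftMap (E : Type*) : CodeSpace E → CodeSpace E := fun σ k => σ (k + 1)

/-- The cylinder set `_m[es₀, …, es_{n}] = {σ : σ_{m+k} = es_k}`. -/
def cylSetL {E : Type*} (m : ℤ) (es : List (Option E)) : Set (CodeSpace E) :=
  {σ | ∀ (k : ℕ) (h : k < es.length), σ (m + (k : ℤ)) = es.get ⟨k, h⟩}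

/-- The σ-algebra `𝓕` generated by the cylinder sets `_m[e_m, …, e_0]`, `m ≤ 0`. -/
def pastAlgebra (E : Type*) : MeasurableSpace (CodeSpace E) :=
  MeasurableSpace.generateFrom
    {A | ∃ es : List (Option E), es ≠ [] ∧ A = cylSetL (1 - (es.length : ℤ)) es}

/-- The conditional entropy `h_S(Λ) = H_Λ((_1[e])_{e ∈ Ē} | 𝓕)`. -/
def entropyS {E : Type*} (Λ : Measure (CodeSpace E)) : ℝ≥0∞ :=
  ∑' eo : Option E,
    ∫⁻ σ, ENNReal.ofReal
        (Real.negMulLog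
          ((Λ[Set.indicator {τ : CodeSpace E | τ 1 = eo} (fun _ => (1 : ℝ)) | pastAlgebra E]) σ)) ∂Λ

namespace MarkovSystem

variable {K : Type*} [MetricSpace K] [MeasurableSpace K] {N E : Type*}

/-- The Markov operator `Uf = ∑_e p_e · (f ∘ w_e)` acting on nonnegative Borel functions. -/
def markovOp (M : MarkovSystem K N E) (f : K → ℝ≥0∞) : K → ℝ≥0∞ :=
  fun x => ∑' e : E, ENNReal.ofReal (M.p e x) * f (M.w e x)

/-- The adjoint operator `U*` acting on measures, `(U*ν)(B) = ∫ U(1_B) dν`. -/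
def adjOp (M : MarkovSystem K N E) (ν : Measure K) : Measure K :=
  Measure.sum fun e : E =>
    Measure.map (M.w e) (ν.withDensity fun x => ENNReal.ofReal (M.p e x))

/-- `μ ∈ P(M)`: `μ` is an invariant Borel probability measure, `U*μ = μ`. -/
def IsInvariantMeasure (M : MarkovSystem K N E) (μ : Measure K) : Prop :=
  IsProbabilityMeasure μ ∧ M.adjOp μ = μ

/-- The path space `Σ_G`: all coordinates lie in `E` and `i(σ_{n+1}) = t(σ_n)`. -/
def pathSpace (M : MarkovSystem K N E) : Set (CodeSpace E) :=
  {σ | ∀ n : ℤ, ∃ e e' : E, σ n = some e ∧ σ (n + 1) = some e' ∧ M.i e' = M.t e}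

/-- `T_j = {σ ∈ Σ_G : t(σ_0) = j}`. -/
def Tset (M : MarkovSystem K N E) (j : N) : Set (CodeSpace E) :=
  {σ | σ ∈ M.pathSpace ∧ ∃ e : E, σ 0 = some e ∧ M.t e = j}

/-- `w` extended to `Ē`, with `w_∞ = id`. -/
def wext (M : MarkovSystem K N E) : Option E → K → K := fun o => o.elim id M.w

/-- `p` extended to `Ē`, with `p_∞ = 0`. -/
def pext (M : MarkovSystem K N E) : Option E → K → ℝ := fun o => o.elim (fun _ => 0) M.p

/-- `i` extended to `Ē`, with `i(∞) = j₀`. -/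
def iext (M : MarkovSystem K N E) (j0 : N) : Option E → N := fun o => o.elim j0 M.i

/-- `t` extended to `Ē`, with `t(∞) = j₀`. -/
def text (M : MarkovSystem K N E) (j0 : N) : Option E → N := fun o => o.elim j0 M.t

/-- `iterW M σ n y = w_{σ_0} ∘ w_{σ_{-1}} ∘ ⋯ ∘ w_{σ_{-n}} (y)`. -/
def iterW (M : MarkovSystem K N E) (σ : CodeSpace E) : ℕ → K → K
  | 0, y => M.wext (σ 0) y
  | n + 1, y => M.iterW σ n (M.wext (σ (-(n + 1 : ℤ))) y)

/-- `orbit M j0 xp σ n = w_{σ_0} ∘ ⋯ ∘ w_{σ_{-n}} (x_{i(σ_{-n})})`. -/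
def orbit (M : MarkovSystem K N E) (j0 : N) (xp : N → K) (σ : CodeSpace E) (n : ℕ) : K :=
  M.iterW σ n (xp (M.iext j0 (σ (-(n : ℤ)))))

/-- `D`: the set of `σ ∈ Σ_G` for which `lim_{m → -∞} w_{σ_0} ∘ ⋯ ∘ w_{σ_m}(x_{i(σ_m)})` exists. -/
def codeDomain (M : MarkovSystem K N E) (j0 : N) (xp : N → K) : Set (CodeSpace E) :=
  {σ | σ ∈ M.pathSpace ∧ ∃ l : K, Tendsto (fun n : ℕ => M.orbit j0 xp σ n) atTop (𝓝 l)}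

/-- The coding map `F`: the above limit on `D`, and `x_{t(σ_0)}` elsewhere. -/
def code (M : MarkovSystem K N E) (j0 : N) (xp : N → K) (σ : CodeSpace E) : K :=
  if h : σ ∈ M.codeDomain j0 xp then h.2.choose else xp (M.text j0 (σ 0))

/-- `Λ ∈ E(M)`: `Λ` is a shift-invariant Borel probability measure with `Λ(D) = 1` and
`E_Λ(1_{_1[e]} | 𝓕) = p_e ∘ F` `Λ`-a.e. for every `e ∈ E` (an equilibrium state). -/
def IsEquilibrium (M : MarkovSystem K N E) (j0 : N) (xp : N → K)
    (Λ : Measure (CodeSpace E)) : Prop :=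
  IsProbabilityMeasure Λ ∧ Measure.map (shiftMap E) Λ = Λ ∧
    Λ (M.codeDomain j0 xp) = 1 ∧
    ∀ e : E,
      (Λ[Set.indicator {σ : CodeSpace E | σ 1 = some e} (fun _ => (1 : ℝ)) | pastAlgebra E])
        =ᵐ[Λ] fun σ => M.p e (M.code j0 xp σ)

/-- `pbar` is the family of continuous extensions `p̄_e` of `p_e|_{K_{i(e)}}` to the closure
of `K_{i(e)}`, extended further by zero on `K`. -/
def IsUCExtensionP (M : MarkovSystem K N E) (pbar : E → K → ℝ) : Prop :=
  ∀ e : E, ContinuousOn (pbar e) (closure (M.Kset (M.i e))) ∧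
    (∀ x ∈ M.Kset (M.i e), pbar e x = M.p e x) ∧
    (∀ x, x ∉ closure (M.Kset (M.i e)) → pbar e x = 0)

/-- `wb` is a family of continuous extensions `w̄_e` of `w_e|_{K_{i(e)}}` to the closure
of `K_{i(e)}`. -/
def IsUCExtensionW (M : MarkovSystem K N E) (wb : E → K → K) : Prop :=
  ∀ e : E, ContinuousOn (wb e) (closure (M.Kset (M.i e))) ∧
    (∀ x ∈ M.Kset (M.i e), wb e x = M.w e x)

/-- The Markov system is uniformly continuous: each `w_e|_{K_{i(e)}}` and `p_e|_{K_{i(e)}}`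
is uniformly continuous. -/
def IsUniformlyContinuous (M : MarkovSystem K N E) : Prop :=
  ∀ e : E, UniformContinuousOn (M.w e) (M.Kset (M.i e)) ∧
    UniformContinuousOn (M.p e) (M.Kset (M.i e))

/-- `∂p_e = p̄_e · 1_{cl(K_{i(e)}) \ K_{i(e)}}`. -/
def dp (M : MarkovSystem K N E) (pbar : E → K → ℝ) (e : E) : K → ℝ :=
  Set.indicator (closure (M.Kset (M.i e)) \ M.Kset (M.i e)) (pbar e)

/-- `Λ ∈ Ẽ(M)` (asymptotic state): shift-invariant probability with `Λ(D) = 1` and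
`E_Λ(1_{_1[e]} | 𝓕) = (p̄_e ∘ F)·1_{T_{i(e)}}` `Λ`-a.e. for every `e`. -/
def IsAsymptotic (M : MarkovSystem K N E) (j0 : N) (xp : N → K) (pbar : E → K → ℝ)
    (Λ : Measure (CodeSpace E)) : Prop :=
  IsProbabilityMeasure Λ ∧ Measure.map (shiftMap E) Λ = Λ ∧
    Λ (M.codeDomain j0 xp) = 1 ∧
    ∀ e : E,
      (Λ[Set.indicator {σ : CodeSpace E | σ 1 = some e} (fun _ => (1 : ℝ)) | pastAlgebra E])
        =ᵐ[Λ] Set.indicator (M.Tset (M.i e)) (fun σ => pbar e (M.code j0 xp σ))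

/-- `Λ ∈ E_⊥(M)`: shift-invariant probability with `Λ(D) = 1` and
`E_Λ(1_{_1[e]} | 𝓕) = (∂p_e ∘ F)·1_{T_{i(e)}}` `Λ`-a.e. for every `e`. -/
def IsPerp (M : MarkovSystem K N E) (j0 : N) (xp : N → K) (pbar : E → K → ℝ)
    (Λ : Measure (CodeSpace E)) : Prop :=
  IsProbabilityMeasure Λ ∧ Measure.map (shiftMap E) Λ = Λ ∧
    Λ (M.codeDomain j0 xp) = 1 ∧
    ∀ e : E,
      (Λ[Set.indicator {σ : CodeSpace E | σ 1 = some e} (fun _ => (1 : ℝ)) | pastAlgebra E])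
        =ᵐ[Λ] Set.indicator (M.Tset (M.i e)) (fun σ => M.dp pbar e (M.code j0 xp σ))

/-- `G = ⋃_{k ≥ 0} ⋃_{j ∈ N} S^{-k}(F^{-1}(K_j) ∩ T_j)`. -/
def Gset (M : MarkovSystem K N E) (j0 : N) (xp : N → K) : Set (CodeSpace E) :=
  ⋃ (k : ℕ) (j : N), (shiftMap E)^[k] ⁻¹' ((M.code j0 xp) ⁻¹' (M.Kset j) ∩ M.Tset j)

/-- `M` is non-degenerate: for every asymptotic state `Λ` there is `i ∈ N` with
`Λ(T_i ∩ F^{-1}(K_i)) > 0`. -/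
def IsNonDegenerate (M : MarkovSystem K N E) (j0 : N) (xp : N → K) (pbar : E → K → ℝ) : Prop :=
  ∀ Λ : Measure (CodeSpace E), M.IsAsymptotic j0 xp pbar Λ →
    ∃ i : N, 0 < Λ (M.Tset i ∩ (M.code j0 xp) ⁻¹' (M.Kset i))

/-- `M` is consistent: `F(Λ) ∈ P(M)` for every asymptotic state `Λ`. -/
def IsConsistent (M : MarkovSystem K N E) (j0 : N) (xp : N → K) (pbar : E → K → ℝ) : Prop :=
  ∀ Λ : Measure (CodeSpace E), M.IsAsymptotic j0 xp pbar Λ →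
    M.IsInvariantMeasure (Measure.map (M.code j0 xp) Λ)

/-- `Rf = ∑_e ∂p_e · (f ∘ w̄_e)`. -/
def Rop (M : MarkovSystem K N E) (pbar : E → K → ℝ) (wb : E → K → K)
    (f : K → ℝ≥0∞) : K → ℝ≥0∞ :=
  fun x => ∑' e : E, ENNReal.ofReal (M.dp pbar e x) * f (wb e x)

/-- `Ω = ⋂_{n ≥ 1} {R^n 1 ≥ 1}`. -/
def OmegaSet (M : MarkovSystem K N E) (pbar : E → K → ℝ) (wb : E → K → K) : Set K :=
  ⋂ n : ℕ, {x : K | 1 ≤ (M.Rop pbar wb)^[n + 1] (fun _ => 1) x}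

/-- `ξ_j = ∑_{e, i(e) = j} sup_{x ∈ K_j} p_e(x)`. -/
def xi (M : MarkovSystem K N E) (j : N) : ℝ≥0∞ :=
  ∑' e : {e : E // M.i e = j}, ⨆ x ∈ M.Kset j, ENNReal.ofReal (M.p e.val x)

/-- `M` has a dominating Markov chain: `ξ_j < ∞` for all `j ∈ N`. -/
def HasDominatingChain (M : MarkovSystem K N E) : Prop := ∀ j : N, M.xi j ≠ ⊤

/-- `ξ_j · q_{j j'} = ∑_{e, i(e) = j, t(e) = j'} sup_{x ∈ K_j} p_e(x)`. -/
def xiq (M : MarkovSystem K N E) (j j' : N) : ℝ≥0∞ :=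
  ∑' e : {e : E // M.i e = j ∧ M.t e = j'}, ⨆ x ∈ M.Kset j, ENNReal.ofReal (M.p e.val x)

/-- `c = ∑_{j'} sup_j ξ_j q_{j j'}`. -/
def cConst (M : MarkovSystem K N E) : ℝ≥0∞ := ∑' j' : N, ⨆ j : N, M.xiq j j'

/-- `α^{x_0}_n({j}) = (1/n) ∑_{k=1}^n ((U*)^k δ_{x_0})(K_j)`. -/
def alphaMeas (M : MarkovSystem K N E) (x0 : K) (n : ℕ) (j : N) : ℝ≥0∞ :=
  (n : ℝ≥0∞)⁻¹ * ∑ k ∈ Finset.range n, (M.adjOp^[k + 1] (Measure.dirac x0)) (M.Kset j)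

/-- Condition (T) at `x_0`: the sequence `(α^{x_0}_n)_n` is uniformly tight. -/
def ConditionT (M : MarkovSystem K N E) (x0 : K) : Prop :=
  ∀ ε : ℝ, 0 < ε → ∃ V : Finset N,
    ∀ n : ℕ, (∑' j : {j : N // j ∉ V}, M.alphaMeas x0 (n + 1) j.val) < ENNReal.ofReal ε

/-- `M` is contractive with contraction rate `a`:
`∑_{e, i(e) = j} p_e(x) d(w_e x, w_e y) ≤ a·d(x, y)` on each `K_j`. -/
def IsContractive (M : MarkovSystem K N E) (a : ℝ) : Prop :=
  ∀ j : N, ∀ x ∈ M.Kset j, ∀ y ∈ M.Kset j,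
    (∑' e : {e : E // M.i e = j},
        ENNReal.ofReal (M.p e.val x * dist (M.w e.val x) (M.w e.val y)))
      ≤ ENNReal.ofReal (a * dist x y)

/-- `L(x) = ∑_j d(x, x_j)·1_{K_j}(x)`. -/
def Lfun (M : MarkovSystem K N E) (xp : N → K) : K → ℝ≥0∞ :=
  fun x => ∑' j : N, Set.indicator (M.Kset j) (fun y => ENNReal.ofReal (dist y (xp j))) x

/-- `b = sup_j sup_{x ∈ K_j} ∑_{e, i(e) = j} p_e(x)·d(w_e(x_{i(e)}), x_{t(e)})`. -/
def bConst (M : MarkovSystem K N E) (xp : N → K) : ℝ≥0∞ :=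
  ⨆ j : N, ⨆ x ∈ M.Kset j,
    ∑' e : {e : E // M.i e = j},
      ENNReal.ofReal (M.p e.val x * dist (M.w e.val (xp (M.i e.val))) (xp (M.t e.val)))

/-- `P^m_x` evaluated on a word: `p_{e_0}(x)·p_{e_1}(w_{e_0}x)·⋯`. -/
def wordProb (M : MarkovSystem K N E) : List (Option E) → K → ℝ
  | [], _ => 1
  | o :: rest, x => M.pext o x * M.wordProb rest (M.wext o x)

/-- `Λ = Φ(μ)`: `Λ` is a shift-invariant Borel probability measure with
`Λ(_m[e_m, …, e_n]) = ∫ P^m_x(_m[e_m, …, e_n]) dμ(x)` for all cylinders with `m ≤ 0`. -/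
def IsPhiOf (M : MarkovSystem K N E) (μ : Measure K) (Λ : Measure (CodeSpace E)) : Prop :=
  IsProbabilityMeasure Λ ∧ Measure.map (shiftMap E) Λ = Λ ∧
    ∀ m : ℤ, m ≤ 0 → ∀ es : List (Option E),
      Λ (cylSetL m es) = ∫⁻ x, ENNReal.ofReal (M.wordProb es x) ∂μ

/-- The (negative of the) energy function: `-u(σ) = -log p_{σ_1}(F(σ))` on `D`
(`+∞` if `p_{σ_1}(F(σ)) = 0`) and `+∞` off `D`, valued in `[0, ∞]`. -/
def negEnergy (M : MarkovSystem K N E) (j0 : N) (xp : N → K) (σ : CodeSpace E) : ℝ≥0∞ :=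
  if σ ∈ M.codeDomain j0 xp then
    (σ 1).elim ⊤ fun e =>
      if M.p e (M.code j0 xp σ) = 0 then ⊤
      else ENNReal.ofReal (-Real.log (M.p e (M.code j0 xp σ)))
  else ⊤

/-- The free energy `h_S(Λ) + ∫ u dΛ`, as an extended real number. -/
def freeEnergy (M : MarkovSystem K N E) (j0 : N) (xp : N → K)
    (Λ : Measure (CodeSpace E)) : EReal :=
  (entropyS Λ : EReal) - ((∫⁻ σ, M.negEnergy j0 xp σ ∂Λ : ℝ≥0∞) : EReal)

/-- `Λ₀ ∈ E(u)`: `Λ₀` is a thermodynamic equilibrium state for the energy function `u`. -/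
def IsEquilibriumForU (M : MarkovSystem K N E) (j0 : N) (xp : N → K)
    (Λ0 : Measure (CodeSpace E)) : Prop :=
  IsProbabilityMeasure Λ0 ∧ Measure.map (shiftMap E) Λ0 = Λ0 ∧ entropyS Λ0 ≠ ⊤ ∧
    M.freeEnergy j0 xp Λ0 =
      sSup {r : EReal | ∃ Λ : Measure (CodeSpace E),
        IsProbabilityMeasure Λ ∧ Measure.map (shiftMap E) Λ = Λ ∧ entropyS Λ ≠ ⊤ ∧
          r = M.freeEnergy j0 xp Λ}

end MarkovSystem

end


variable {K : Type*} [MetricSpace K] [CompleteSpace K] [MeasurableSpace K] [BorelSpace K]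
  {N E : Type*} [Countable N] [Countable E]

/-!
If `Λ` is an equilibrium state, its image `μ` under the coding map satisfies `U*μ = μ`. Hopf's
maximal inequality bounds the `μ`-measure of the points at which some Cesàro mean of `U^k 1_A`
exceeds `c` by `μ(A)/c`. Applied to the tails `A = ⋃_{j ∉ V} K_j`, whose `μ`-measure is arbitrarily
small, this yields a point `x₀` with uniformly tight Cesàro means.

For the converse, the Cesàro means of `U^k f (x₀)` along an ultrafilter define a mean `ℓ` which is
invariant but a priori only finitely additive. Tightness together with the dominating Markov chain
makes the weights `ℓ (P_x(e_0 ⋯ e_n))` of finite words countably additive in each letter, so they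
are the cylinder probabilities of a shift-invariant measure `Λ`. Contraction makes the backward
orbits converge `Λ`-almost surely and lets `p_e` at a random endpoint be replaced by its value at
the backward orbit, so that `Λ` is an asymptotic state. The set where the coded point lies in the
cell of the current vertex is shift invariant modulo `Λ` and lies in the past `σ`-algebra; by
non-degeneracy it has positive mass, and `Λ` conditioned on it is an equilibrium state.
-/

/-! ### Words and cylinder sets -/

section Words

variable {E : Type*}

/-- The sum of `g` over all words of length `n` in the alphabet `E`. -/
noncomputable def wordSum (n : ℕ) (g : List E → ℝ≥0∞) : ℝ≥0∞ :=
  ∑' v : Fin n → E, g (List.ofFn v)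

lemma wordSum_zero (g : List E → ℝ≥0∞) : wordSum 0 g = g [] := by
  simp [wordSum]

lemma wordSum_succ (n : ℕ) (g : List E → ℝ≥0∞) :
    wordSum (n + 1) g = ∑' e, wordSum n (fun w => g (e :: w)) := by
  unfold wordSum
  rw [← (Fin.consEquiv (fun _ : Fin (n + 1) => E)).tsum_eq, ENNReal.tsum_prod']
  simp [Fin.consEquiv]

lemma wordSum_mono {n : ℕ} {f g : List E → ℝ≥0∞} (h : ∀ w, w.length = n → f w ≤ g w) :
    wordSum n f ≤ wordSum n g :=
  ENNReal.tsum_le_tsum fun v => h _ (by simp)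

lemma wordSum_congr {n : ℕ} {f g : List E → ℝ≥0∞} (h : ∀ w, w.length = n → f w = g w) :
    wordSum n f = wordSum n g :=
  tsum_congr fun v => h _ (by simp)

lemma wordSum_add (n : ℕ) (f g : List E → ℝ≥0∞) :
    wordSum n (fun w => f w + g w) = wordSum n f + wordSum n g :=
  ENNReal.tsum_add

lemma wordSum_const_mul (n : ℕ) (c : ℝ≥0∞) (f : List E → ℝ≥0∞) :
    wordSum n (fun w => c * f w) = c * wordSum n f :=
  ENNReal.tsum_mul_left

lemma wordSum_tsum_comm {ι : Type*} (n : ℕ) (f : ι → List E → ℝ≥0∞) :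
    wordSum n (fun w => ∑' i, f i w) = ∑' i, wordSum n (f i) :=
  ENNReal.tsum_comm

lemma wordSum_append_right {lam : List E → ℝ≥0∞} (hleft : ∀ w, ∑' e, lam (e :: w) = lam w)
    (n : ℕ) (u : List E) : wordSum n (fun l => lam (l ++ u)) = lam u := by
  induction n with
  | zero => simp [wordSum_zero]
  | succ n ih =>
    rw [wordSum_succ, ← wordSum_tsum_comm]
    simp only [List.cons_append, hleft, ih]

lemma wordSum_eq_nil {lam : List E → ℝ≥0∞} (hright : ∀ w, ∑' e, lam (w ++ [e]) = lam w) (n : ℕ) :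
    wordSum n lam = lam [] := by
  induction n generalizing lam with
  | zero => simp [wordSum_zero]
  | succ n ih =>
    have hcons : ∀ e, wordSum n (fun w => lam (e :: w)) = lam [e] := fun e =>
      ih (lam := fun w => lam (e :: w)) fun w => hright (e :: w)
    simp only [wordSum_succ, hcons]
    exact hright []

lemma wordSum_prefix {lam : List E → ℝ≥0∞} (hright : ∀ w, ∑' e, lam (w ++ [e]) = lam w)
    (u : List E) (n : ℕ) :
    wordSum (u.length + n) (fun w => if u <+: w then lam w else 0) = lam u := by
  induction u generalizing lam with
  | nil => simpa using wordSum_eq_nil hright n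
  | cons a u ih =>
    rw [List.length_cons, Nat.add_right_comm, wordSum_succ, tsum_eq_single a]
    · simp only [List.cons_prefix_cons, true_and]
      exact ih (lam := fun w => lam (a :: w)) fun w => hright (a :: w)
    · intro e he
      simp [List.cons_prefix_cons, Ne.symm he, wordSum]

lemma wordSum_prefix_drop {lam : List E → ℝ≥0∞} (hright : ∀ w, ∑' e, lam (w ++ [e]) = lam w)
    (u : List E) (k n : ℕ) :
    wordSum (k + (u.length + n)) (fun w => if u <+: w.drop k then lam w else 0)
      = wordSum k (fun l => lam (l ++ u)) := by
  induction k generalizing lam with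
  | zero => simpa [wordSum_zero] using wordSum_prefix hright u n
  | succ k ih =>
    rw [Nat.add_right_comm, wordSum_succ, wordSum_succ]
    refine tsum_congr fun e => ?_
    simpa using ih (lam := fun w => lam (e :: w)) fun w => hright (e :: w)

lemma exists_eq_map_some {es : List (Option E)} (h : none ∉ es) :
    ∃ w : List E, es = w.map some := by
  refine ⟨es.reduceOption, ?_⟩
  rw [List.reduceOption, List.map_filterMap]
  conv_lhs => rw [← List.filterMap_some (l := es)]
  refine List.filterMap_congr fun o ho => ?_
  cases o with
  | none => exact absurd ho h
  | some e => rfl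

end Words

section Cylinders

variable {E : Type*}

lemma cylSetL_nil (m : ℤ) : cylSetL m ([] : List (Option E)) = Set.univ := by
  simp [cylSetL]

lemma mem_cylSetL_cons {m : ℤ} {o : Option E} {es : List (Option E)} {σ : CodeSpace E} :
    σ ∈ cylSetL m (o :: es) ↔ σ m = o ∧ σ ∈ cylSetL (m + 1) es := by
  have hshift : ∀ k : ℕ, m + 1 + (k : ℤ) = m + ((k + 1 : ℕ) : ℤ) := fun k => by push_cast; ring
  simp only [cylSetL, Set.mem_ofPred_eq, List.get_eq_getElem, hshift]
  constructor
  · exact fun h => ⟨by simpa using h 0 (by simp), fun k hk => h (k + 1) (by simpa using hk)⟩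
  · rintro ⟨h0, h⟩ (_ | k) hk
    · simpa using h0
    · exact h k (by simpa using hk)

lemma cylSetL_cons (m : ℤ) (o : Option E) (es : List (Option E)) :
    cylSetL m (o :: es) = {σ | σ m = o} ∩ cylSetL (m + 1) es :=
  Set.ext fun _ => mem_cylSetL_cons

lemma cylSetL_singleton (m : ℤ) (o : Option E) : cylSetL m [o] = {σ | σ m = o} := by
  rw [cylSetL_cons, cylSetL_nil, Set.inter_univ]

lemma cylSetL_append_singleton (m : ℤ) (es : List (Option E)) (o : Option E) :
    cylSetL m (es ++ [o]) = cylSetL m es ∩ {σ | σ (m + es.length) = o} := by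
  induction es generalizing m with
  | nil => simp [cylSetL_singleton, cylSetL_nil]
  | cons o' es ih =>
    rw [List.cons_append, cylSetL_cons, ih, cylSetL_cons, Set.inter_assoc, List.length_cons]
    push_cast
    rw [add_right_comm, add_assoc]

lemma measurableSet_coord (k : ℤ) (o : Option E) :
    MeasurableSet {σ : CodeSpace E | σ k = o} :=
  (measurable_pi_apply k : Measurable fun σ : CodeSpace E => σ k)
    (MeasurableSpace.measurableSet_top (s := {o}))

lemma disjoint_coord (k : ℤ) {o o' : Option E} (h : o ≠ o') :
    Disjoint {σ : CodeSpace E | σ k = o} {σ | σ k = o'} :=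
  Set.disjoint_left.2 fun _ hσ hσ' => h (hσ.symm.trans hσ')

lemma measurableSet_cylSetL (m : ℤ) (es : List (Option E)) : MeasurableSet (cylSetL m es) := by
  induction es generalizing m with
  | nil => simp [cylSetL_nil]
  | cons o es ih => rw [cylSetL_cons]; exact (measurableSet_coord m o).inter (ih _)

lemma mem_cylSetL_iff_of_mem {m : ℤ} {es : List (Option E)} {σ τ : CodeSpace E}
    (hσ : σ ∈ cylSetL m es) :
    τ ∈ cylSetL m es ↔ ∀ k : ℤ, m ≤ k → k < m + es.length → τ k = σ k := by
  constructor
  · intro hτ k h1 h2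
    obtain ⟨j, rfl⟩ : ∃ j : ℕ, k = m + j := ⟨(k - m).toNat, by omega⟩
    rw [hσ j (by omega), hτ j (by omega)]
  · intro h j hj
    rw [h _ (by omega) (by omega), hσ j hj]

lemma cylSetL_subset_or_disjoint {n m : ℕ} (hnm : n ≤ m) {es es' : List (Option E)}
    (hes : es.length = n + 1) (hes' : es'.length = m + 1) :
    cylSetL (-(m : ℤ)) es' ⊆ cylSetL (-(n : ℤ)) es ∨
      Disjoint (cylSetL (-(n : ℤ)) es) (cylSetL (-(m : ℤ)) es') := by
  rcases (cylSetL (-(n : ℤ)) es ∩ cylSetL (-(m : ℤ)) es').eq_empty_or_nonempty with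
    hempty | ⟨σ, hσ, hσ'⟩
  · exact Or.inr (Set.disjoint_iff_inter_eq_empty.2 hempty)
  · refine Or.inl fun τ hτ => (mem_cylSetL_iff_of_mem hσ).2 fun k hk hk' => ?_
    exact (mem_cylSetL_iff_of_mem hσ').1 hτ k (by lia) (by lia)

lemma mem_cylSetL_ofFn (m : ℤ) (n : ℕ) (σ : CodeSpace E) :
    σ ∈ cylSetL m (List.ofFn fun i : Fin n => σ (m + i)) := by
  intro k hk
  simp

lemma measurable_shiftMap : Measurable (shiftMap E) :=
  measurable_pi_lambda _ fun k => measurable_pi_apply (k + 1)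

lemma shiftMap_preimage_cylSetL (m : ℤ) (es : List (Option E)) :
    shiftMap E ⁻¹' cylSetL m es = cylSetL (m + 1) es := by
  ext σ
  simp only [cylSetL, shiftMap, Set.mem_preimage, Set.mem_ofPred_eq]
  exact forall₂_congr fun k _ => by rw [add_right_comm]

end Cylinders

section Windows

variable {E : Type*}

/-- The cylinder sets over the coordinate windows `[-n, L n - n)`, `n ∈ ℕ`. The past `σ`-algebra
is generated by `L n = n + 1`, the full one by `L n = 2 n + 1`. -/
def windowCyl (E : Type*) (L : ℕ → ℕ) : Set (Set (CodeSpace E)) :=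
  {A | ∃ (n : ℕ) (es : List (Option E)), es.length = L n ∧ A = cylSetL (-(n : ℤ)) es}

lemma isPiSystem_windowCyl {L : ℕ → ℕ} (hL : Monotone fun n => (L n : ℤ) - n) :
    IsPiSystem (windowCyl E L) := by
  have hsub : ∀ n n' : ℕ, n ≤ n' → ∀ es es' : List (Option E), es.length = L n →
      es'.length = L n' → (cylSetL (-(n : ℤ)) es ∩ cylSetL (-(n' : ℤ)) es').Nonempty →
      cylSetL (-(n' : ℤ)) es' ⊆ cylSetL (-(n : ℤ)) es := by
    rintro n n' hn es es' h h' ⟨σ, hσ, hσ'⟩ τ hτ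
    have hLn : (L n : ℤ) - n ≤ L n' - n' := hL hn
    rw [mem_cylSetL_iff_of_mem hσ]
    exact fun k _ _ => (mem_cylSetL_iff_of_mem hσ').1 hτ k (by omega) (by omega)
  rintro _ ⟨n, es, h, rfl⟩ _ ⟨n', es', h', rfl⟩ hne
  rcases le_total n n' with hn | hn
  · rw [Set.inter_eq_right.2 (hsub n n' hn es es' h h' hne)]
    exact ⟨n', es', h', rfl⟩
  · rw [Set.inter_eq_left.2 (hsub n' n hn es' es h' h (Set.inter_comm _ _ ▸ hne))]
    exact ⟨n, es, h, rfl⟩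

lemma measurable_generateFrom_windowCyl [Countable E] {β : Type*} [MeasurableSpace β] {L : ℕ → ℕ}
    {f : CodeSpace E → β} (n : ℕ)
    (hf : ∀ σ τ : CodeSpace E, (∀ k : ℤ, -n ≤ k → k < -n + L n → σ k = τ k) → f σ = f τ) :
    Measurable[MeasurableSpace.generateFrom (windowCyl E L)] f := by
  intro s _
  have hunion : f ⁻¹' s = ⋃ v ∈ {v : Fin (L n) → Option E | ∃ σ, f σ ∈ s ∧
      v = fun i : Fin (L n) => σ (-n + i)}, cylSetL (-(n : ℤ)) (List.ofFn v) := by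
    ext τ
    simp only [Set.mem_preimage, Set.mem_iUnion, Set.mem_ofPred_eq, exists_prop]
    constructor
    · exact fun hτ => ⟨_, ⟨τ, hτ, rfl⟩, mem_cylSetL_ofFn _ _ _⟩
    · rintro ⟨_, ⟨σ, hσ, rfl⟩, hτ⟩
      rw [hf τ σ fun k h1 h2 => (mem_cylSetL_iff_of_mem (mem_cylSetL_ofFn _ _ _)).1 hτ k h1
        (by simpa using h2)]
      exact hσ
  rw [hunion]
  exact MeasurableSet.biUnion (Set.to_countable _) fun v _ =>
    MeasurableSpace.measurableSet_generateFrom ⟨n, _, by simp, rfl⟩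

lemma pastAlgebra_eq_generateFrom :
    pastAlgebra E = MeasurableSpace.generateFrom (windowCyl E fun n => n + 1) := by
  unfold pastAlgebra
  congr 1
  ext A
  constructor
  · rintro ⟨es, hes, rfl⟩
    have hpos := List.length_pos_iff.2 hes
    refine ⟨es.length - 1, es, by dsimp only; omega, ?_⟩
    congr 1
    omega
  · rintro ⟨n, es, h, rfl⟩
    refine ⟨es, by rintro rfl; simp at h, ?_⟩
    congr 1
    rw [h]; push_cast; ring

lemma pi_eq_generateFrom_windowCyl [Countable E] :
    (MeasurableSpace.pi : MeasurableSpace (CodeSpace E))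
      = MeasurableSpace.generateFrom (windowCyl E fun n => 2 * n + 1) := by
  refine le_antisymm (iSup_le fun k => ?_) (MeasurableSpace.generateFrom_le ?_)
  · rw [← measurable_iff_comap_le]
    refine measurable_generateFrom_windowCyl k.natAbs fun σ τ h => h k ?_ ?_
    all_goals push_cast
    · exact neg_abs_le k
    · linarith [le_abs_self k, abs_nonneg k]
  · rintro _ ⟨n, es, _, rfl⟩
    exact measurableSet_cylSetL _ _

lemma pastAlgebra_le : pastAlgebra E ≤ MeasurableSpace.pi := by
  refine MeasurableSpace.generateFrom_le ?_
  rintro _ ⟨es, _, rfl⟩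
  exact measurableSet_cylSetL _ _

lemma measurable_pastAlgebra [Countable E] {β : Type*} [MeasurableSpace β]
    {f : CodeSpace E → β} (n : ℕ)
    (hf : ∀ σ τ : CodeSpace E, (∀ k : ℕ, k ≤ n → σ (-(k : ℤ)) = τ (-(k : ℤ))) → f σ = f τ) :
    Measurable[pastAlgebra E] f := by
  rw [pastAlgebra_eq_generateFrom]
  refine measurable_generateFrom_windowCyl n fun σ τ h => hf σ τ fun k hk => h _ (by omega) ?_
  push_cast; omega

lemma measure_eq_of_cylSetL_past {μ ν : Measure (CodeSpace E)} [IsFiniteMeasure μ]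
    (h : ∀ (n : ℕ) (es : List (Option E)), es.length = n + 1 →
      μ (cylSetL (-(n : ℤ)) es) = ν (cylSetL (-(n : ℤ)) es))
    (huniv : μ Set.univ = ν Set.univ) {s : Set (CodeSpace E)}
    (hs : MeasurableSet[pastAlgebra E] s) : μ s = ν s := by
  refine ext_on_measurableSpace_of_generate_finite _ _ ?_ pastAlgebra_le
    pastAlgebra_eq_generateFrom (isPiSystem_windowCyl fun a b _ => ?_) huniv hs
  · rintro _ ⟨n, es, hes, rfl⟩
    exact h n es hes
  · push_cast; omega

lemma measure_ext_of_cylSetL [Countable E] {μ ν : Measure (CodeSpace E)} [IsFiniteMeasure μ]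
    (h : ∀ (m : ℤ) (es : List (Option E)), μ (cylSetL m es) = ν (cylSetL m es)) : μ = ν := by
  refine ext_of_generate_finite _ pi_eq_generateFrom_windowCyl
    (isPiSystem_windowCyl fun a b hab => ?_) ?_ ?_
  · push_cast; omega
  · rintro _ ⟨n, es, _, rfl⟩
    exact h _ es
  · simpa only [cylSetL_nil] using h 0 []

end Windows

/-! ### Measures on the code space from stationary weights -/

section StationaryWeights

variable {E : Type*}

/-- Weights on finite words that are consistent under extension by one letter on either side: the
cylinder probabilities of a shift-invariant measure on `E^ℤ`. -/
structure IsStationaryWeight (lam : List E → ℝ≥0∞) : Prop where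
  nil : lam [] = 1
  tsum_append : ∀ w, ∑' e, lam (w ++ [e]) = lam w
  tsum_cons : ∀ w, ∑' e, lam (e :: w) = lam w

/-- `Λ` gives the cylinder `_m[w]` over a word `w` in `E` the weight `lam w`, for every `m`. -/
def HasCylinderWeights (Λ : Measure (CodeSpace E)) (lam : List E → ℝ≥0∞) : Prop :=
  ∀ (m : ℤ) (w : List E), Λ (cylSetL m (w.map some)) = lam w

/-- The word `w` written at the coordinates `-n, 1 - n, …`, padded by `∞`. -/
def padWord (n : ℕ) (w : List E) : CodeSpace E :=
  fun k => if 0 ≤ k + n then w[(k + n).toNat]? else none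

lemma padWord_mem_cylSetL {n p : ℕ} {m : ℤ} (h : m + n = p) (w u : List E) :
    padWord n w ∈ cylSetL m (u.map some) ↔ u <+: w.drop p := by
  rw [List.prefix_iff_getElem?]
  simp only [cylSetL, Set.mem_ofPred_eq, List.length_map, List.get_eq_getElem, List.getElem_map,
    padWord, List.getElem?_drop]
  refine forall₂_congr fun k hk => ?_
  rw [if_pos (by omega), show (m + k + n).toNat = p + k by omega]

/-- The law on the code space under which the word at the coordinates `-n, …, n` is drawn with
the weights `lam` and all other coordinates are `∞`. -/
noncomputable def windowLaw (lam : List E → ℝ≥0∞) (n : ℕ) : Measure (CodeSpace E) :=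
  Measure.sum fun v : Fin (2 * n + 1) → E =>
    lam (List.ofFn v) • Measure.dirac (padWord n (List.ofFn v))

lemma windowLaw_apply (lam : List E → ℝ≥0∞) (n : ℕ) {A : Set (CodeSpace E)}
    (hA : MeasurableSet A) :
    windowLaw lam n A = wordSum (2 * n + 1) fun w => if padWord n w ∈ A then lam w else 0 := by
  rw [windowLaw, Measure.sum_apply _ hA]
  refine tsum_congr fun v => ?_
  simp [Measure.dirac_apply' _ hA, Set.indicator_apply]

lemma IsStationaryWeight.windowLaw_cylSetL {lam : List E → ℝ≥0∞} (hlam : IsStationaryWeight lam)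
    {m : ℤ} {w : List E} {n : ℕ} (hn : m.natAbs + w.length ≤ n) :
    windowLaw lam n (cylSetL m (w.map some)) = lam w := by
  obtain ⟨p, hp⟩ : ∃ p : ℕ, m + n = p := ⟨(m + n).toNat, by omega⟩
  obtain ⟨r, hr⟩ : ∃ r : ℕ, 2 * n + 1 = p + (w.length + r) :=
    ⟨2 * n + 1 - p - w.length, by omega⟩
  rw [windowLaw_apply _ _ (measurableSet_cylSetL _ _)]
  simp only [padWord_mem_cylSetL hp]
  rw [hr, wordSum_prefix_drop hlam.tsum_append, wordSum_append_right hlam.tsum_cons]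

lemma IsStationaryWeight.isProbabilityMeasure_windowLaw {lam : List E → ℝ≥0∞}
    (hlam : IsStationaryWeight lam) (n : ℕ) : IsProbabilityMeasure (windowLaw lam n) := ⟨by
  simpa [cylSetL_nil, hlam.nil] using hlam.windowLaw_cylSetL (m := 0) (w := []) (n := n) (by simp)⟩

/-- The topology of the one-point compactification of the discrete space `E` on `Option E`. -/
@[reducible] def onePointTopology (E : Type*) : TopologicalSpace (Option E) :=
  letI : TopologicalSpace E := ⊥
  inferInstanceAs (TopologicalSpace (OnePoint E))

attribute [local instance] onePointTopology

lemma isOpen_singleton_some (e : E) : IsOpen ({some e} : Set (Option E)) := by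
  let : TopologicalSpace E := ⊥
  have : DiscreteTopology E := ⟨rfl⟩
  rw [← Set.image_singleton]
  exact OnePoint.isOpen_image_coe.2 (isOpen_discrete {e})

lemma compactSpace_option : CompactSpace (Option E) :=
  letI : TopologicalSpace E := ⊥
  inferInstanceAs (CompactSpace (OnePoint E))

lemma t2Space_option : T2Space (Option E) := by
  let : TopologicalSpace E := ⊥
  have : DiscreteTopology E := ⟨rfl⟩
  exact inferInstanceAs (T2Space (OnePoint E))

lemma secondCountableTopology_option [Countable E] : SecondCountableTopology (Option E) := by
  let : TopologicalSpace E := ⊥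
  have : DiscreteTopology E := ⟨rfl⟩
  have hbasis : TopologicalSpace.IsTopologicalBasis
      (Set.range (fun e : E => ({some e} : Set (OnePoint E))) ∪
        Set.range fun s : Finset E => ((fun e : E => (e : OnePoint E)) '' (s : Set E))ᶜ) := by
    refine TopologicalSpace.isTopologicalBasis_of_isOpen_of_nhds ?_ fun x u hx hu => ?_
    · rintro u (⟨e, rfl⟩ | ⟨s, rfl⟩)
      · exact isOpen_singleton_some e
      · exact (s.finite_toSet.image _).isClosed.isOpen_compl
    · induction x using OnePoint.rec with
      | coe e => exact ⟨_, Or.inl ⟨e, rfl⟩, rfl, Set.singleton_subset_iff.2 hx⟩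
      | infty =>
        have hfin := ((OnePoint.isOpen_def.1 hu).1 hx).finite_of_discrete
        refine ⟨_, Or.inr ⟨hfin.toFinset, rfl⟩, by simp, fun y hy => ?_⟩
        induction y using OnePoint.rec with
        | infty => exact hx
        | coe e => by_contra h; exact hy ⟨e, by simpa using h, rfl⟩
  exact hbasis.secondCountableTopology ((Set.countable_range _).union (Set.countable_range _))

lemma isClopen_cylSetL_map_some (m : ℤ) (w : List E) : IsClopen (cylSetL m (w.map some)) := by
  have := t2Space_option (E := E)
  induction w generalizing m with
  | nil => simpa [cylSetL_nil] using isClopen_univ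
  | cons e w ih =>
    rw [List.map_cons, cylSetL_cons]
    have hsome : IsClopen ({some e} : Set (Option E)) :=
      ⟨isClosed_singleton, isOpen_singleton_some e⟩
    exact (hsome.preimage (continuous_apply m)).inter (ih (m + 1))

theorem IsStationaryWeight.exists_measure [Countable E] {lam : List E → ℝ≥0∞}
    (hlam : IsStationaryWeight lam) :
    ∃ Λ : Measure (CodeSpace E), IsProbabilityMeasure Λ ∧ HasCylinderWeights Λ lam := by
  have := compactSpace_option (E := E)
  have := t2Space_option (E := E)
  have := secondCountableTopology_option (E := E)
  have : BorelSpace (Option E) := ⟨borel_eq_top_of_countable.symm⟩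
  let law : ℕ → ProbabilityMeasure (CodeSpace E) := fun n =>
    ⟨windowLaw lam n, hlam.isProbabilityMeasure_windowLaw n⟩
  let 𝒰 : Ultrafilter (ProbabilityMeasure (CodeSpace E)) := (hyperfilter ℕ).map law
  have hlim : Tendsto law (hyperfilter ℕ : Filter ℕ) (𝓝 𝒰.lim) := 𝒰.le_nhds_lim
  refine ⟨(𝒰.lim : ProbabilityMeasure (CodeSpace E)), inferInstance, fun m w => ?_⟩
  have hcyl := ENNReal.tendsto_coe.2 (ProbabilityMeasure.tendsto_measure_of_isClopen_of_tendsto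
    hlim (isClopen_cylSetL_map_some m w))
  simp only [ProbabilityMeasure.ennreal_coeFn_eq_coeFn_toMeasure] at hcyl
  refine tendsto_nhds_unique hcyl (tendsto_const_nhds.congr' (Nat.hyperfilter_le_atTop ?_))
  filter_upwards [eventually_ge_atTop (m.natAbs + w.length)] with n hn
  exact (hlam.windowLaw_cylSetL hn).symm

variable {Λ : Measure (CodeSpace E)} {lam : List E → ℝ≥0∞}

lemma HasCylinderWeights.measure_coord_none [Countable E] [IsProbabilityMeasure Λ]
    (h : HasCylinderWeights Λ lam) (hlam : IsStationaryWeight lam) (k : ℤ) :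
    Λ {σ | σ k = none} = 0 := by
  have hm : MeasurableSet (⋃ e : E, {σ : CodeSpace E | σ k = some e}) :=
    MeasurableSet.iUnion fun e => measurableSet_coord k (some e)
  have hone : Λ (⋃ e : E, {σ | σ k = some e}) = 1 := by
    rw [measure_iUnion (fun e e' hne => disjoint_coord k (Option.some_injective _ |>.ne hne))
      fun e => measurableSet_coord k (some e), ← hlam.nil, ← hlam.tsum_append []]
    refine tsum_congr fun e => ?_
    rw [← cylSetL_singleton]
    exact h k [e]
  rw [← prob_compl_eq_zero_iff hm] at hone
  refine measure_mono_null (fun σ hσ => ?_) hone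
  simp only [Set.mem_ofPred_eq] at hσ
  simp [hσ]

lemma HasCylinderWeights.map_shiftMap [Countable E] [IsProbabilityMeasure Λ]
    (h : HasCylinderWeights Λ lam) (hlam : IsStationaryWeight lam) :
    Measure.map (shiftMap E) Λ = Λ := by
  have := Measure.isProbabilityMeasure_map (μ := Λ) (measurable_shiftMap (E := E)).aemeasurable
  have hnull : ∀ (m : ℤ) {es : List (Option E)}, none ∈ es → Λ (cylSetL m es) = 0 := by
    intro m es hes
    obtain ⟨k, hk, hk'⟩ := List.getElem_of_mem hes
    exact measure_mono_null (fun σ hσ => (hσ k hk).trans hk') (h.measure_coord_none hlam (m + k))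
  refine measure_ext_of_cylSetL fun m es => ?_
  rw [Measure.map_apply measurable_shiftMap (measurableSet_cylSetL _ _), shiftMap_preimage_cylSetL]
  by_cases hes : none ∈ es
  · rw [hnull _ hes, hnull _ hes]
  · obtain ⟨w, rfl⟩ := exists_eq_map_some hes
    rw [h, h]

lemma lintegral_eq_tsum_coord [Countable E] {m : ℤ} (hm : Λ {σ | σ m = none} = 0)
    (f : CodeSpace E → ℝ≥0∞) :
    ∫⁻ σ, f σ ∂Λ = ∑' e : E, ∫⁻ σ in {σ | σ m = some e}, f σ ∂Λ := by
  rw [← lintegral_iUnion (fun e => measurableSet_coord m (some e))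
    fun e e' hne => disjoint_coord m (Option.some_injective _ |>.ne hne), ← setLIntegral_univ]
  refine setLIntegral_congr (eventuallyEq_set.2 ?_)
  have hae : ∀ᵐ σ ∂Λ, σ m ≠ none := by simpa [ae_iff] using hm
  filter_upwards [hae] with σ hσ
  simpa [eq_comm] using Option.ne_none_iff_exists.1 hσ

lemma lintegral_eq_wordSum [Countable E] (hΛ : ∀ k : ℤ, Λ {σ | σ k = none} = 0) (n : ℕ) (m : ℤ)
    (f : CodeSpace E → ℝ≥0∞) :
    ∫⁻ σ, f σ ∂Λ = wordSum n fun w => ∫⁻ σ in cylSetL m (w.map some), f σ ∂Λ := by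
  induction n generalizing m Λ with
  | zero => simp [wordSum_zero, cylSetL_nil]
  | succ n ih =>
    rw [wordSum_succ, lintegral_eq_tsum_coord (hΛ m)]
    refine tsum_congr fun e => ?_
    rw [ih (Λ := Λ.restrict {σ | σ m = some e})
      (fun k => le_antisymm ((Measure.restrict_apply_le _ _).trans (hΛ k).le) bot_le) (m + 1)]
    refine wordSum_congr fun w _ => ?_
    rw [List.map_cons, cylSetL_cons, Measure.restrict_restrict (measurableSet_cylSetL _ _),
      Set.inter_comm]

lemma setLIntegral_le_add_wordSum [Countable E] (hΛ : ∀ k : ℤ, Λ {σ | σ k = none} = 0) {n : ℕ}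
    {m : ℤ} {A : Set (CodeSpace E)}
    (hA : ∀ w : List E, w.length = n → cylSetL m (w.map some) ⊆ A ∨
      Disjoint A (cylSetL m (w.map some)))
    {f g : CodeSpace E → ℝ≥0∞} {d : List E → ℝ≥0∞}
    (h : ∀ w : List E, w.length = n → ∫⁻ σ in cylSetL m (w.map some), f σ ∂Λ
      ≤ ∫⁻ σ in cylSetL m (w.map some), g σ ∂Λ + d w) :
    ∫⁻ σ in A, f σ ∂Λ ≤ ∫⁻ σ in A, g σ ∂Λ + wordSum n d := by
  have hnone (k : ℤ) : Λ.restrict A {σ | σ k = none} = 0 :=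
    Measure.absolutelyContinuous_of_le Measure.restrict_le_self (hΛ k)
  rw [lintegral_eq_wordSum hnone n m f, lintegral_eq_wordSum hnone n m g, ← wordSum_add]
  refine wordSum_mono fun w hw => ?_
  rw [Measure.restrict_restrict (measurableSet_cylSetL _ _)]
  rcases hA w hw with hsub | hdisj
  · rw [Set.inter_eq_left.2 hsub]
    exact h w hw
  · simp [Set.disjoint_iff_inter_eq_empty.1 hdisj.symm]

end StationaryWeights

section Conditioning

variable {Ω : Type*} {m0 : MeasurableSpace Ω} {μ : Measure Ω} {A : Set Ω}

lemma measurePreserving_cond {T : Ω → Ω} (hT : MeasurePreserving T μ μ) (hA : MeasurableSet A)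
    (hinv : A =ᵐ[μ] T ⁻¹' A) :
    MeasurePreserving T (ProbabilityTheory.cond μ A) (ProbabilityTheory.cond μ A) := by
  have h := hT.restrict_preimage hA
  rw [← Measure.restrict_congr_set hinv] at h
  exact h.smul_measure _

lemma cond_inter_eq_setLIntegral {m : MeasurableSpace Ω} (hm : m ≤ m0) (hA : MeasurableSet[m] A)
    {B : Set Ω} {g g' : Ω → ℝ≥0∞}
    (hg : ∀ s, MeasurableSet[m] s → μ (s ∩ B) = ∫⁻ ω in s, g ω ∂μ) (hgg' : Set.EqOn g g' A)
    {s : Set Ω} (hs : MeasurableSet[m] s) :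
    ProbabilityTheory.cond μ A (s ∩ B) = ∫⁻ ω in s, g' ω ∂(ProbabilityTheory.cond μ A) := by
  rw [ProbabilityTheory.cond_apply (hm A hA), ProbabilityTheory.cond, Measure.restrict_smul,
    lintegral_smul_measure, smul_eq_mul, Measure.restrict_restrict (hm s hs), ← Set.inter_assoc,
    hg _ (hA.inter hs), Set.inter_comm s,
    setLIntegral_congr_fun ((hm A hA).inter (hm s hs)) fun ω hω => hgg' hω.1]

end Conditioning

section ConditionalExpectation

variable {Ω : Type*} {m m0 : MeasurableSpace Ω} {μ : Measure Ω}

lemma condExp_indicator_ae_eq_iff [IsFiniteMeasure μ] (hm : m ≤ m0) {B : Set Ω}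
    (hB : MeasurableSet B) {g : Ω → ℝ} (hg : Measurable[m] g) (hg0 : ∀ ω, 0 ≤ g ω)
    (hint : Integrable g μ) :
    μ[B.indicator (fun _ => (1 : ℝ)) | m] =ᵐ[μ] g ↔
      ∀ s, MeasurableSet[m] s → μ (s ∩ B) = ∫⁻ ω in s, ENNReal.ofReal (g ω) ∂μ := by
  have hBint : Integrable (B.indicator fun _ => (1 : ℝ)) μ := (integrable_const 1).indicator hB
  have hindicator : ∀ s, ∫ ω in s, B.indicator (fun _ => (1 : ℝ)) ω ∂μ = (μ (s ∩ B)).toReal := by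
    intro s
    rw [integral_indicator hB, integral_const, smul_eq_mul, mul_one, Measure.restrict_restrict hB,
      measureReal_restrict_apply_univ, Set.inter_comm, Measure.real]
  have hdensity : ∀ s, ∫ ω in s, g ω ∂μ = (∫⁻ ω in s, ENNReal.ofReal (g ω) ∂μ).toReal := fun s =>
    integral_eq_lintegral_of_nonneg_ae (ae_of_all _ hg0) (hg.mono hm le_rfl).aestronglyMeasurable
  have hfin : ∀ s, ∫⁻ ω in s, ENNReal.ofReal (g ω) ∂μ ≠ ⊤ := fun s =>
    (hint.integrableOn (s := s)).lintegral_lt_top.ne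
  constructor
  · intro h s hs
    have heq := setIntegral_condExp (μ := μ) hm hBint hs
    rw [setIntegral_congr_ae (g := g) (hm s hs) (h.mono fun ω hω _ => hω), hindicator,
      hdensity] at heq
    exact ((ENNReal.toReal_eq_toReal_iff' (hfin s) (measure_ne_top _ _)).1 heq).symm
  · intro h
    refine (ae_eq_condExp_of_forall_setIntegral_eq hm hBint (fun s _ _ => hint.integrableOn)
      (fun s hs _ => ?_) hg.stronglyMeasurable.aestronglyMeasurable).symm
    rw [hindicator, hdensity, h s hs]

lemma setLIntegral_eq_lintegral_mul_of_density (hm : m ≤ m0) {B : Set Ω}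
    {g : Ω → ℝ≥0∞} (hg : Measurable g)
    (h : ∀ s, MeasurableSet[m] s → μ (s ∩ B) = ∫⁻ ω in s, g ω ∂μ)
    {f : Ω → ℝ≥0∞} (hf : Measurable[m] f) :
    ∫⁻ ω in B, f ω ∂μ = ∫⁻ ω, g ω * f ω ∂μ := by
  have htrim : (μ.restrict B).trim hm = (μ.withDensity g).trim hm := by
    refine @Measure.ext _ m _ _ fun s hs => ?_
    rw [trim_measurableSet_eq _ hs, trim_measurableSet_eq _ hs, Measure.restrict_apply (hm s hs),
      withDensity_apply _ (hm s hs), h s hs]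
  rw [← lintegral_trim hm hf, htrim, lintegral_trim hm hf,
    lintegral_withDensity_eq_lintegral_mul _ hg (hf.mono hm le_rfl)]
  rfl

end ConditionalExpectation

lemma condExp_coord_ae_eq_iff {E : Type*} {Λ : Measure (CodeSpace E)} [IsFiniteMeasure Λ] (e : E)
    {f g : CodeSpace E → ℝ} (hg : Measurable[pastAlgebra E] g) (hg01 : ∀ σ, g σ ∈ Set.Icc 0 1)
    (hfg : f =ᵐ[Λ] g) :
    Λ[Set.indicator {σ : CodeSpace E | σ 1 = some e} (fun _ => (1 : ℝ)) | pastAlgebra E] =ᵐ[Λ] f ↔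
      ∀ s, MeasurableSet[pastAlgebra E] s →
        Λ (s ∩ {σ | σ 1 = some e}) = ∫⁻ σ in s, ENNReal.ofReal (g σ) ∂Λ := by
  have hint : Integrable g Λ :=
    Integrable.of_bound (hg.mono pastAlgebra_le le_rfl).aestronglyMeasurable 1
      (ae_of_all _ fun σ => (Real.norm_of_nonneg (hg01 σ).1).trans_le (hg01 σ).2)
  rw [← condExp_indicator_ae_eq_iff pastAlgebra_le (measurableSet_coord 1 (some e)) hg
    (fun σ => (hg01 σ).1) hint]
  exact ⟨fun h => h.trans hfg, fun h => h.trans hfg.symm⟩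

/-! ### Cesàro means of Markov operators -/

section MarkovOperator

variable {X : Type*} {U : Module.End ℝ≥0∞ (X → ℝ≥0∞)}

lemma monotone_of_map_add {A B F : Type*} [Add A] [PartialOrder A] [CanonicallyOrderedAdd A]
    [Add B] [PartialOrder B] [CanonicallyOrderedAdd B] [FunLike F A B] [AddHomClass F A B]
    (φ : F) : Monotone φ := by
  intro a b hab
  obtain ⟨c, rfl⟩ := exists_add_of_le hab
  rw [map_add]
  exact le_self_add

lemma pow_apply_one (hU : U 1 = 1) (k : ℕ) : (U ^ k) 1 = 1 := by
  rw [Module.End.pow_apply]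
  exact Function.iterate_fixed hU k

lemma pow_apply_le_one (hU : U 1 = 1) (k : ℕ) {f : X → ℝ≥0∞} (hf : f ≤ 1) : (U ^ k) f ≤ 1 :=
  (monotone_of_map_add (U ^ k) hf).trans_eq (pow_apply_one hU k)

lemma pow_apply_le_of_drift (hU : U 1 = 1) {f : X → ℝ≥0∞} {α β : ℝ≥0∞}
    (hf : U f ≤ α • f + β • 1) (k : ℕ) :
    (U ^ k) f ≤ α ^ k • f + (β * ∑ i ∈ Finset.range k, α ^ i) • 1 := by
  induction k with
  | zero => simp
  | succ k ih =>
    calc (U ^ (k + 1)) f = U ((U ^ k) f) := by rw [pow_succ']; rfl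
      _ ≤ α ^ k • U f + (β * ∑ i ∈ Finset.range k, α ^ i) • 1 := by
          simpa only [map_add, map_smul, hU] using monotone_of_map_add U ih
      _ ≤ α ^ k • (α • f + β • 1) + (β * ∑ i ∈ Finset.range k, α ^ i) • 1 :=
          add_le_add_left (fun x => mul_le_mul_right (hf x) _) _
      _ = α ^ (k + 1) • f + (β * ∑ i ∈ Finset.range (k + 1), α ^ i) • 1 := by
          rw [Finset.sum_range_succ, smul_add, smul_smul, smul_smul, add_assoc, ← add_smul,
            pow_succ, mul_add, mul_comm β (α ^ k), add_comm (α ^ k * β)]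

/-- The Cesàro mean `(n+1)⁻¹ ∑_{k=1}^{n+1} U^k`. -/
noncomputable def cesaroMean (U : Module.End ℝ≥0∞ (X → ℝ≥0∞)) (n : ℕ) :
    Module.End ℝ≥0∞ (X → ℝ≥0∞) :=
  ((n + 1 : ℕ) : ℝ≥0∞)⁻¹ • ∑ k ∈ Finset.range (n + 1), U ^ (k + 1)

lemma cesaroMean_apply (U : Module.End ℝ≥0∞ (X → ℝ≥0∞)) (n : ℕ) (f : X → ℝ≥0∞) (x : X) :
    cesaroMean U n f x
      = ((n + 1 : ℕ) : ℝ≥0∞)⁻¹ * ∑ k ∈ Finset.range (n + 1), (U ^ (k + 1)) f x := by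
  simp [cesaroMean, LinearMap.sum_apply]

lemma cesaroMean_le {n : ℕ} {f : X → ℝ≥0∞} {x : X} {C : ℝ≥0∞}
    (h : ∑ k ∈ Finset.range (n + 1), (U ^ (k + 1)) f x ≤ (n + 1 : ℕ) * C) :
    cesaroMean U n f x ≤ C := by
  rw [cesaroMean_apply, mul_comm, ← div_eq_mul_inv]
  exact ENNReal.div_le_of_le_mul' h

lemma cesaroMean_one (hU : U 1 = 1) (n : ℕ) (x : X) : cesaroMean U n 1 x = 1 := by
  simp only [cesaroMean_apply, pow_apply_one hU, Pi.one_apply, Finset.sum_const,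
    Finset.card_range, nsmul_eq_mul, mul_one]
  exact ENNReal.inv_mul_cancel (by simp) (ENNReal.natCast_ne_top _)

lemma cesaroMean_map_add (U : Module.End ℝ≥0∞ (X → ℝ≥0∞)) (n : ℕ) (f : X → ℝ≥0∞) (x : X) :
    cesaroMean U n (U f) x + ((n + 1 : ℕ) : ℝ≥0∞)⁻¹ * U f x
      = cesaroMean U n f x + ((n + 1 : ℕ) : ℝ≥0∞)⁻¹ * (U ^ (n + 2)) f x := by
  have hpow : ∀ k, (U ^ k) (U f) = (U ^ (k + 1)) f := fun k => by rw [pow_succ]; rfl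
  simp only [cesaroMean_apply, ← mul_add, hpow]
  rw [← Finset.sum_range_succ (fun k => (U ^ (k + 1)) f x) (n + 1),
    Finset.sum_range_succ' (fun k => (U ^ (k + 1)) f x) (n + 1), zero_add, pow_one]

end MarkovOperator

section MaximalInequality

variable {X : Type*} {U : Module.End ℝ≥0∞ (X → ℝ≥0∞)} {h : X → ℝ≥0∞}

/-- A recursively defined majorant of the positive parts of `∑_{i<k} U^i h - k c`, `k ≤ n`. For a
composition operator `U` it is their maximum, as in Garsia's proof of the maximal ergodic theorem;
subtraction truncates at `0`. -/
noncomputable def maxDev (U : Module.End ℝ≥0∞ (X → ℝ≥0∞)) (h : X → ℝ≥0∞) (c : ℝ≥0∞) :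
    ℕ → X → ℝ≥0∞
  | 0 => 0
  | n + 1 => h + U (maxDev U h c n) - c • 1

lemma maxDev_le_succ (c : ℝ≥0∞) (n : ℕ) : maxDev U h c n ≤ maxDev U h c (n + 1) := by
  induction n with
  | zero => exact fun _ => zero_le
  | succ n ih => exact tsub_le_tsub_right (add_le_add_right (monotone_of_map_add U ih) h) _

lemma sum_pow_le_maxDev (hU : U 1 = 1) (c : ℝ≥0∞) (n : ℕ) :
    ∑ k ∈ Finset.range n, (U ^ k) h ≤ maxDev U h c n + ((n : ℝ≥0∞) * c) • 1 := by
  induction n with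
  | zero => simp
  | succ n ih =>
    have hshift : ∑ k ∈ Finset.range n, (U ^ (k + 1)) h = U (∑ k ∈ Finset.range n, (U ^ k) h) := by
      simp [map_sum, pow_succ']
    calc ∑ k ∈ Finset.range (n + 1), (U ^ k) h
        = h + U (∑ k ∈ Finset.range n, (U ^ k) h) := by
          rw [Finset.sum_range_succ', hshift, add_comm]; rfl
      _ ≤ h + U (maxDev U h c n + ((n : ℝ≥0∞) * c) • 1) :=
          add_le_add_right (monotone_of_map_add U ih) h
      _ = (h + U (maxDev U h c n)) + ((n : ℝ≥0∞) * c) • 1 := by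
          rw [map_add, map_smul, hU, add_assoc]
      _ ≤ (maxDev U h c (n + 1) + c • 1) + ((n : ℝ≥0∞) * c) • 1 :=
          add_le_add_left le_tsub_add _
      _ = maxDev U h c (n + 1) + (((n + 1 : ℕ) : ℝ≥0∞) * c) • 1 := by
          rw [add_assoc, ← add_smul]; push_cast; ring_nf

lemma maxDev_le (hU : U 1 = 1) (hh : h ≤ 1) (c : ℝ≥0∞) (n : ℕ) :
    maxDev U h c n ≤ (n : ℝ≥0∞) • 1 := by
  induction n with
  | zero => simp [maxDev]
  | succ n ih =>
    calc maxDev U h c (n + 1) ≤ h + U (maxDev U h c n) := tsub_le_self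
      _ ≤ 1 + U ((n : ℝ≥0∞) • 1) := add_le_add hh (monotone_of_map_add U ih)
      _ = ((n + 1 : ℕ) : ℝ≥0∞) • 1 := by
          rw [map_smul, hU, Nat.cast_succ, add_smul, one_smul, add_comm]

lemma cesaroMean_le_of_maxDev_eq_zero (hU : U 1 = 1) {f : X → ℝ≥0∞} {c : ℝ≥0∞} {n : ℕ} {x : X}
    (hx : maxDev U (U f) c (n + 1) x = 0) : cesaroMean U n f x ≤ c := by
  have hsum := sum_pow_le_maxDev (h := U f) hU c (n + 1) x
  have hpow : ∀ k, (U ^ (k + 1)) f = (U ^ k) (U f) := fun k => by rw [pow_succ]; rfl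
  refine cesaroMean_le ?_
  simpa [hpow, hx] using hsum

variable [MeasurableSpace X] {μ : Measure X}

lemma measurable_maxDev (hUm : ∀ f, Measurable f → Measurable (U f)) (hm : Measurable h)
    (c : ℝ≥0∞) (n : ℕ) : Measurable (maxDev U h c n) := by
  induction n with
  | zero => exact measurable_const
  | succ n ih => exact (hm.add (hUm _ ih)).sub (measurable_const.const_smul c)

lemma mul_measure_maxDev_pos_le [IsFiniteMeasure μ] (hU : U 1 = 1)
    (hUm : ∀ f, Measurable f → Measurable (U f))
    (hμ : ∀ f, Measurable f → ∫⁻ x, U f x ∂μ = ∫⁻ x, f x ∂μ) (hm : Measurable h) (hh : h ≤ 1)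
    (c : ℝ≥0∞) (n : ℕ) : c * μ {x | 0 < maxDev U h c n x} ≤ ∫⁻ x, h x ∂μ := by
  have hdev := measurable_maxDev hUm hm c
  cases n with
  | zero => simp [maxDev]
  | succ n =>
    have hA : MeasurableSet {x | 0 < maxDev U h c (n + 1) x} :=
      measurableSet_lt measurable_const (hdev _)
    have hpointwise : ∀ x, maxDev U h c (n + 1) x
        + {x | 0 < maxDev U h c (n + 1) x}.indicator (fun _ => c) x
        ≤ h x + U (maxDev U h c n) x := by
      intro x
      by_cases hx : 0 < maxDev U h c (n + 1) x
      · have hsub : maxDev U h c (n + 1) x = h x + U (maxDev U h c n) x - c := by simp [maxDev]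
        rw [Set.indicator_of_mem (by exact hx), hsub]
        exact (tsub_add_cancel_of_le (tsub_pos_iff_lt.1 (hsub ▸ hx)).le).le
      · rw [Set.indicator_of_notMem (by exact hx), le_antisymm (not_lt.1 hx) zero_le]
        simp
    have hfin : ∫⁻ x, maxDev U h c (n + 1) x ∂μ ≠ ⊤ := by
      refine ne_top_of_le_ne_top ?_ (lintegral_mono (maxDev_le hU hh c (n + 1)))
      simpa using ENNReal.mul_ne_top (by simp) (measure_ne_top μ _)
    refine (ENNReal.add_le_add_iff_left hfin).1 ?_
    calc ∫⁻ x, maxDev U h c (n + 1) x ∂μ + c * μ {x | 0 < maxDev U h c (n + 1) x}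
        = ∫⁻ x, maxDev U h c (n + 1) x
            + {x | 0 < maxDev U h c (n + 1) x}.indicator (fun _ => c) x ∂μ := by
          rw [lintegral_add_left (hdev _), lintegral_indicator_const hA]
      _ ≤ ∫⁻ x, h x + U (maxDev U h c n) x ∂μ := lintegral_mono hpointwise
      _ = ∫⁻ x, maxDev U h c n x ∂μ + ∫⁻ x, h x ∂μ := by
          rw [lintegral_add_left hm, hμ _ (hdev n), add_comm]
      _ ≤ ∫⁻ x, maxDev U h c (n + 1) x ∂μ + ∫⁻ x, h x ∂μ :=
          add_le_add_left (lintegral_mono (maxDev_le_succ c n)) _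

/-- Hopf's maximal ergodic inequality. -/
theorem mul_measure_lt_cesaroMean_le [IsFiniteMeasure μ] (hU : U 1 = 1)
    (hUm : ∀ f, Measurable f → Measurable (U f))
    (hμ : ∀ f, Measurable f → ∫⁻ x, U f x ∂μ = ∫⁻ x, f x ∂μ)
    {f : X → ℝ≥0∞} (hf : Measurable f) (hf1 : f ≤ 1) (c : ℝ≥0∞) :
    c * μ {x | ∃ n, c < cesaroMean U n f x} ≤ ∫⁻ x, f x ∂μ := by
  have hU1 : U f ≤ 1 := (monotone_of_map_add U hf1).trans_eq hU
  have hsub : {x | ∃ n, c < cesaroMean U n f x} ⊆ ⋃ n, {x | 0 < maxDev U (U f) c n x} := by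
    rintro x ⟨n, hn⟩
    refine Set.mem_iUnion.2 ⟨n + 1, ?_⟩
    by_contra h0
    exact hn.not_ge (cesaroMean_le_of_maxDev_eq_zero hU (nonpos_iff_eq_zero.1 (not_lt.1 h0)))
  have hmono : Monotone fun n => {x | 0 < maxDev U (U f) c n x} :=
    monotone_nat_of_le_succ fun n x hx => lt_of_lt_of_le hx (maxDev_le_succ c n x)
  refine (mul_le_mul_right (measure_mono hsub) c).trans ?_
  rw [hmono.measure_iUnion, ENNReal.mul_iSup, ← hμ f hf]
  exact iSup_le fun n => mul_measure_maxDev_pos_le hU hUm hμ (hUm f hf) hU1 c n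

lemma exists_forall_exists_cesaroMean_le [IsProbabilityMeasure μ] (hU : U 1 = 1)
    (hUm : ∀ f, Measurable f → Measurable (U f))
    (hμ : ∀ f, Measurable f → ∫⁻ x, U f x ∂μ = ∫⁻ x, f x ∂μ) {ι : Type*} {f : ι → X → ℝ≥0∞}
    (hf : ∀ i, Measurable (f i)) (hf1 : ∀ i, f i ≤ 1)
    (hsmall : ∀ ε : ℝ≥0∞, ε ≠ 0 → ∃ i, ∫⁻ x, f i x ∂μ ≤ ε) :
    ∃ x, ∀ ε : ℝ≥0∞, ε ≠ 0 → ∃ i, ∀ n, cesaroMean U n (f i) x ≤ ε := by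
  obtain ⟨δ, hδpos, hδsum⟩ := ENNReal.exists_pos_sum_of_countable' one_ne_zero ℕ
  have hδtop : ∑' k, δ k ≠ ⊤ := (hδsum.trans ENNReal.one_lt_top).ne
  choose i hi using fun k => hsmall (δ k * δ k) (mul_ne_zero (hδpos k).ne' (hδpos k).ne')
  let bad (k : ℕ) : Set X := {x | ∃ n, δ k < cesaroMean U n (f (i k)) x}
  have hbad : ∀ k, μ (bad k) ≤ δ k := fun k =>
    (ENNReal.mul_le_mul_iff_right (hδpos k).ne' (ENNReal.ne_top_of_tsum_ne_top hδtop k)).1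
      ((mul_measure_lt_cesaroMean_le hU hUm hμ (hf (i k)) (hf1 (i k)) (δ k)).trans (hi k))
  have hunion : μ (⋃ k, bad k) < 1 :=
    (measure_iUnion_le _).trans_lt ((ENNReal.tsum_le_tsum hbad).trans_lt hδsum)
  obtain ⟨x, hx⟩ : ∃ x, x ∉ ⋃ k, bad k := by
    by_contra! hall
    rw [Set.eq_univ_of_forall hall, measure_univ] at hunion
    exact lt_irrefl _ hunion
  simp only [bad, Set.mem_iUnion, Set.mem_ofPred_eq, not_exists, not_lt] at hx
  refine ⟨x, fun ε hε => ?_⟩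
  have hlim : Tendsto δ atTop (𝓝 0) := by
    simpa [Nat.cofinite_eq_atTop] using ENNReal.tendsto_cofinite_zero_of_tsum_ne_top hδtop
  obtain ⟨k, hk⟩ := (hlim.eventually (ge_mem_nhds (pos_iff_ne_zero.2 hε))).exists
  exact ⟨i k, fun n => (hx k n).trans hk⟩

end MaximalInequality

section CesaroLimit

variable {X : Type*} {U : Module.End ℝ≥0∞ (X → ℝ≥0∞)} {x₀ : X}

lemma tendsto_lim_hyperfilter {Y : Type*} [TopologicalSpace Y] [CompactSpace Y] [Nonempty Y]
    (u : ℕ → Y) : Tendsto u (hyperfilter ℕ) (𝓝 ((hyperfilter ℕ).map u).lim) :=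
  ((hyperfilter ℕ).map u).le_nhds_lim

/-- The limit of the Cesàro means at `x₀` along a fixed nonprincipal ultrafilter, a Banach limit.
It is homogeneous only for finite scalars. -/
noncomputable def cesaroLim (U : Module.End ℝ≥0∞ (X → ℝ≥0∞)) (x₀ : X) :
    (X → ℝ≥0∞) →ₗ[ℝ≥0] ℝ≥0∞ where
  toFun f := ((hyperfilter ℕ).map fun n => cesaroMean U n f x₀).lim
  map_add' f g := by
    refine tendsto_nhds_unique (tendsto_lim_hyperfilter _) ?_
    simp only [map_add, Pi.add_apply]
    exact (tendsto_lim_hyperfilter _).add (tendsto_lim_hyperfilter _)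
  map_smul' c f := by
    refine tendsto_nhds_unique (tendsto_lim_hyperfilter _) ?_
    simp only [LinearMap.map_smul_of_tower, Pi.smul_apply, RingHom.id_apply, ENNReal.smul_def,
      smul_eq_mul]
    exact ENNReal.Tendsto.const_mul (tendsto_lim_hyperfilter _) (Or.inr ENNReal.coe_ne_top)

lemma tendsto_cesaroLim (f : X → ℝ≥0∞) :
    Tendsto (fun n => cesaroMean U n f x₀) (hyperfilter ℕ) (𝓝 (cesaroLim U x₀ f)) :=
  tendsto_lim_hyperfilter _

lemma cesaroLim_le {f : X → ℝ≥0∞} {C : ℝ≥0∞} (h : ∀ n, cesaroMean U n f x₀ ≤ C) :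
    cesaroLim U x₀ f ≤ C :=
  le_of_tendsto' (tendsto_cesaroLim f) h

lemma cesaroLim_one (hU : U 1 = 1) : cesaroLim U x₀ 1 = 1 := by
  refine tendsto_nhds_unique (tendsto_cesaroLim 1) ?_
  simp only [cesaroMean_one hU]
  exact tendsto_const_nhds

lemma cesaroLim_map (hU : U 1 = 1) {f : X → ℝ≥0∞} (hf : f ≤ 1) :
    cesaroLim U x₀ (U f) = cesaroLim U x₀ f := by
  have hinv : Tendsto (fun n : ℕ => ((n + 1 : ℕ) : ℝ≥0∞)⁻¹) (hyperfilter ℕ) (𝓝 0) :=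
    (ENNReal.tendsto_inv_nat_nhds_zero.comp (tendsto_add_atTop_nat 1)).mono_left
      Nat.hyperfilter_le_atTop
  have hvanish : ∀ k : ℕ → ℕ, Tendsto (fun n : ℕ => ((n + 1 : ℕ) : ℝ≥0∞)⁻¹ * (U ^ k n) f x₀)
      (hyperfilter ℕ) (𝓝 0) := fun k =>
    tendsto_of_tendsto_of_tendsto_of_le_of_le tendsto_const_nhds hinv (fun _ => zero_le)
      fun n => mul_le_of_le_one_right' (pow_apply_le_one hU (k n) hf x₀)
  have hleft := (tendsto_cesaroLim (U := U) (x₀ := x₀) (U f)).add (hvanish fun _ => 1)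
  have hright := (tendsto_cesaroLim (U := U) (x₀ := x₀) f).add (hvanish fun n => n + 2)
  simp only [pow_one, cesaroMean_map_add, add_zero] at hleft hright
  exact tendsto_nhds_unique hleft hright

lemma cesaroLim_ne_top_of_drift (hU : U 1 = 1) {f : X → ℝ≥0∞} {α β : ℝ≥0∞}
    (hf : U f ≤ α • f + β • 1) (hα : α < 1) (hβ : β ≠ ⊤) (hx : f x₀ ≠ ⊤) :
    cesaroLim U x₀ f ≠ ⊤ := by
  refine ne_top_of_le_ne_top (b := f x₀ + β * (1 - α)⁻¹) ?_ (cesaroLim_le fun n => cesaroMean_le ?_)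
  · exact ENNReal.add_ne_top.2
      ⟨hx, ENNReal.mul_ne_top hβ (ENNReal.inv_ne_top.2 (tsub_pos_iff_lt.2 hα).ne')⟩
  · refine (Finset.sum_le_card_nsmul _ _ (f x₀ + β * (1 - α)⁻¹) fun k _ => ?_).trans_eq
      (by rw [Finset.card_range, nsmul_eq_mul])
    calc (U ^ (k + 1)) f x₀
        ≤ α ^ (k + 1) * f x₀ + β * ∑ i ∈ Finset.range (k + 1), α ^ i := by
          simpa using pow_apply_le_of_drift hU hf (k + 1) x₀
      _ ≤ f x₀ + β * (1 - α)⁻¹ := by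
          rw [← ENNReal.tsum_geometric]
          exact add_le_add (mul_le_of_le_one_left' (pow_le_one' hα.le _))
            (mul_le_mul_right (ENNReal.sum_le_tsum _) β)

end CesaroLimit

/-! ### The coding map -/

section Past

variable {E : Type*} [Countable E]

lemma stronglyMeasurable_pastAlgebra {β : Type*} [TopologicalSpace β] [Nonempty β]
    {f : CodeSpace E → β} (n : ℕ)
    (hf : ∀ σ τ : CodeSpace E, (∀ k : ℕ, k ≤ n → σ (-(k : ℤ)) = τ (-(k : ℤ))) → f σ = f τ) :
    StronglyMeasurable[pastAlgebra E] f := by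
  let window (σ : CodeSpace E) (i : Fin (n + 1)) : Option E := σ (-(i : ℤ))
  have hwindow : Measurable[pastAlgebra E] window :=
    measurable_pastAlgebra n fun σ τ h => funext fun i => h i (Nat.lt_succ_iff.1 i.2)
  have hfactor : Function.FactorsThrough f window := fun σ τ h =>
    hf σ τ fun k hk => congrFun h ⟨k, Nat.lt_succ_iff.2 hk⟩
  rw [← hfactor.extend_comp fun _ => Classical.arbitrary β]
  exact StronglyMeasurable.of_discrete.comp_measurable hwindow

end Past

namespace MarkovSystem

variable {K : Type*} [MetricSpace K] [MeasurableSpace K] {N E : Type*}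
  {M : MarkovSystem K N E} {j0 : N} {xp : N → K}

section Orbits

lemma iterW_congr {σ τ : CodeSpace E} {n : ℕ}
    (h : ∀ k : ℕ, k ≤ n → σ (-(k : ℤ)) = τ (-(k : ℤ))) : M.iterW σ n = M.iterW τ n := by
  funext y
  induction n generalizing y with
  | zero => simpa [iterW] using congrArg (fun o => M.wext o y) (h 0 le_rfl)
  | succ n ih =>
    have hlast := h (n + 1) le_rfl
    push_cast at hlast
    rw [iterW, iterW, hlast, ih fun k hk => h k (by omega)]

lemma orbit_congr {σ τ : CodeSpace E} {n : ℕ}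
    (h : ∀ k : ℕ, k ≤ n → σ (-(k : ℤ)) = τ (-(k : ℤ))) :
    M.orbit j0 xp σ n = M.orbit j0 xp τ n := by
  rw [orbit, orbit, h n le_rfl, iterW_congr h]

lemma iterW_shiftMap (σ : CodeSpace E) (n : ℕ) (y : K) :
    M.iterW (shiftMap E σ) (n + 1) y = M.wext (σ 1) (M.iterW σ n y) := by
  induction n generalizing y with
  | zero => simp [iterW, shiftMap]
  | succ n ih =>
    have hcoord : shiftMap E σ (-(((n + 1 : ℕ) : ℤ) + 1)) = σ (-((n : ℤ) + 1)) := by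
      unfold shiftMap; congr 1
    rw [iterW, ih, hcoord, iterW]

lemma orbit_shiftMap (σ : CodeSpace E) (n : ℕ) :
    M.orbit j0 xp (shiftMap E σ) (n + 1) = M.wext (σ 1) (M.orbit j0 xp σ n) := by
  have hcoord : shiftMap E σ (-((n + 1 : ℕ) : ℤ)) = σ (-(n : ℤ)) := by
    unfold shiftMap; congr 1; push_cast; ring
  rw [orbit, iterW_shiftMap, hcoord, orbit]

lemma iterW_mem {σ : CodeSpace E} (hσ : σ ∈ M.pathSpace) {e e' : E} {n : ℕ}
    (he' : σ (-(n : ℤ)) = some e') (he : σ 0 = some e) {y : K} (hy : y ∈ M.Kset (M.i e')) :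
    M.iterW σ n y ∈ M.Kset (M.t e) := by
  induction n generalizing e' y with
  | zero =>
    obtain rfl : e' = e := by simpa [he, eq_comm] using he'
    simpa [iterW, wext, he] using M.w_mapsTo e' hy
  | succ n ih =>
    obtain ⟨e₁, e₂, h₁, h₂, h₁₂⟩ := hσ (-((n + 1 : ℕ) : ℤ))
    obtain rfl : e' = e₁ := Option.some_injective _ (he'.symm.trans h₁)
    rw [show -((n + 1 : ℕ) : ℤ) + 1 = -(n : ℤ) by push_cast; ring] at h₂
    rw [Nat.cast_succ] at he'
    rw [iterW, he']
    exact ih h₂ (h₁₂ ▸ M.w_mapsTo e' hy)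

lemma orbit_mem (hxp : ∀ j, xp j ∈ M.Kset j) {σ : CodeSpace E} (hσ : σ ∈ M.pathSpace) {e : E}
    (he : σ 0 = some e) (n : ℕ) : M.orbit j0 xp σ n ∈ M.Kset (M.t e) := by
  obtain ⟨e', _, he', _⟩ := hσ (-(n : ℤ))
  refine iterW_mem hσ he' he ?_
  simpa [he', iext] using hxp (M.i e')

end Orbits

section LimCode

/-- The limit of the backward orbits, with a junk value where it does not exist. Unlike the coding
map `F`, with which it agrees on `D`, it depends on the past coordinates only. -/
noncomputable def limCode (M : MarkovSystem K N E) (j0 : N) (xp : N → K) (σ : CodeSpace E) : K :=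
  have : Nonempty K := ⟨xp j0⟩
  limUnder atTop fun n => M.orbit j0 xp σ n

lemma tendsto_limCode {σ : CodeSpace E} (hσ : σ ∈ M.codeDomain j0 xp) :
    Tendsto (fun n => M.orbit j0 xp σ n) atTop (𝓝 (M.limCode j0 xp σ)) :=
  tendsto_nhds_limUnder hσ.2

lemma limCode_eq_of_tendsto {σ : CodeSpace E} {l : K}
    (h : Tendsto (fun n => M.orbit j0 xp σ n) atTop (𝓝 l)) : M.limCode j0 xp σ = l :=
  h.limUnder_eq

lemma code_eq_limCode {σ : CodeSpace E} (hσ : σ ∈ M.codeDomain j0 xp) :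
    M.code j0 xp σ = M.limCode j0 xp σ := by
  rw [code, dif_pos hσ, limCode_eq_of_tendsto hσ.2.choose_spec]

lemma limCode_shiftMap (hxp : ∀ j, xp j ∈ M.Kset j) (huc : M.IsUniformlyContinuous)
    {σ : CodeSpace E} (hσ : σ ∈ M.codeDomain j0 xp) {e : E} (he : σ 1 = some e)
    (hF : M.limCode j0 xp σ ∈ M.Kset (M.i e)) :
    M.limCode j0 xp (shiftMap E σ) = M.w e (M.limCode j0 xp σ) := by
  refine limCode_eq_of_tendsto ((tendsto_add_atTop_iff_nat 1).1 ?_)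
  simp only [orbit_shiftMap, he]
  obtain ⟨e₀, e₁, h₀, h₁, h₀₁⟩ := hσ.1 0
  obtain rfl : e = e₁ := by simpa [he] using h₁
  refine ((huc e).1.continuousOn _ hF).tendsto.comp (tendsto_nhdsWithin_iff.2
    ⟨tendsto_limCode hσ, Eventually.of_forall fun n => ?_⟩)
  rw [h₀₁]
  exact orbit_mem hxp hσ.1 h₀ n

variable [Countable E]

lemma stronglyMeasurable_orbit (n : ℕ) :
    StronglyMeasurable[pastAlgebra E] fun σ => M.orbit j0 xp σ n :=
  have : Nonempty K := ⟨xp j0⟩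
  stronglyMeasurable_pastAlgebra n fun _ _ h => orbit_congr h

lemma measurable_limCode_past [CompleteSpace K] [BorelSpace K] :
    Measurable[pastAlgebra E] (M.limCode j0 xp) :=
  have : Nonempty K := ⟨xp j0⟩
  (@StronglyMeasurable.limUnder _ _ _ (pastAlgebra E) _ _ _ _ _ _ _
    stronglyMeasurable_orbit).measurable

lemma measurable_limCode [CompleteSpace K] [BorelSpace K] : Measurable (M.limCode j0 xp) :=
  measurable_limCode_past.mono pastAlgebra_le le_rfl

lemma measurableSet_pathSpace (M : MarkovSystem K N E) : MeasurableSet M.pathSpace := by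
  have hpath : M.pathSpace = ⋂ n : ℤ, ⋃ e : E, ⋃ e' : E, ⋃ _ : M.i e' = M.t e,
      {σ : CodeSpace E | σ n = some e} ∩ {σ | σ (n + 1) = some e'} := by
    ext σ
    simp only [pathSpace, Set.mem_ofPred_eq, Set.mem_iInter, Set.mem_iUnion, Set.mem_inter_iff,
      exists_prop]
    refine forall_congr' fun n => exists_congr fun e => exists_congr fun e' => ?_
    tauto
  rw [hpath]
  exact MeasurableSet.iInter fun n => MeasurableSet.iUnion fun e => MeasurableSet.iUnion fun e' =>
    MeasurableSet.iUnion fun _ => (measurableSet_coord _ _).inter (measurableSet_coord _ _)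

lemma measurableSet_codeDomain [CompleteSpace K] : MeasurableSet (M.codeDomain j0 xp) :=
  M.measurableSet_pathSpace.inter <| pastAlgebra_le _ <|
    @StronglyMeasurable.measurableSet_exists_tendsto _ _ _ (pastAlgebra E) _ _ _ _ _ _
      stronglyMeasurable_orbit

lemma ae_mem_codeDomain [CompleteSpace K] {Λ : Measure (CodeSpace E)} [IsProbabilityMeasure Λ]
    (h : Λ (M.codeDomain j0 xp) = 1) : ∀ᵐ σ ∂Λ, σ ∈ M.codeDomain j0 xp :=
  (mem_ae_iff_prob_eq_one measurableSet_codeDomain).2 h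

lemma measure_coord_none_of_codeDomain [CompleteSpace K] {Λ : Measure (CodeSpace E)}
    [IsProbabilityMeasure Λ] (hD : Λ (M.codeDomain j0 xp) = 1)
    (k : ℤ) : Λ {σ | σ k = none} = 0 := by
  suffices ∀ᵐ σ ∂Λ, σ k ≠ none by simpa [ae_iff] using this
  filter_upwards [ae_mem_codeDomain hD] with σ hσ
  obtain ⟨e, _, he, _⟩ := hσ.1 k
  simp [he]

end LimCode

end MarkovSystem

/-! ### The Markov operator -/

namespace MarkovSystem

variable {K : Type*} [MetricSpace K] [MeasurableSpace K] {N E : Type*} (M : MarkovSystem K N E)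

section Partition

lemma exists_mem_Kset (x : K) : ∃ j, x ∈ M.Kset j :=
  Set.mem_iUnion.1 (M.Kset_cover ▸ Set.mem_univ x)

variable {M}

lemma eq_of_mem_Kset {x : K} {j j' : N} (h : x ∈ M.Kset j) (h' : x ∈ M.Kset j') : j = j' :=
  M.Kset_disjoint.eq (Set.not_disjoint_iff.2 ⟨x, h, h'⟩)

lemma mem_Kset_of_p_ne_zero {e : E} {x : K} (h : M.p e x ≠ 0) : x ∈ M.Kset (M.i e) :=
  not_imp_comm.1 (M.p_zero_outside e x) h

lemma tsum_ofReal_p_mul {j : N} {x : K} (hx : x ∈ M.Kset j) (f : E → ℝ≥0∞) :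
    ∑' e, ENNReal.ofReal (M.p e x) * f e
      = ∑' e : {e : E // M.i e = j}, ENNReal.ofReal (M.p e.val x) * f e.val := by
  refine (tsum_subtype_eq_of_support_subset (s := {e : E | M.i e = j}) fun e he => ?_).symm
  have hp : M.p e x ≠ 0 := fun h0 => he (by simp [h0])
  exact eq_of_mem_Kset (mem_Kset_of_p_ne_zero hp) hx

variable (M)

lemma tsum_ofReal_p (x : K) : ∑' e, ENNReal.ofReal (M.p e x) = 1 := by
  obtain ⟨j, hj⟩ := M.exists_mem_Kset x
  have hsum : Summable fun e : {e : E // M.i e = j} => M.p e.val x := by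
    by_contra hs
    exact zero_ne_one ((tsum_eq_zero_of_not_summable hs).symm.trans (M.p_tsum_one j x hj))
  calc ∑' e, ENNReal.ofReal (M.p e x)
      = ∑' e : {e : E // M.i e = j}, ENNReal.ofReal (M.p e.val x) := by
        simpa using tsum_ofReal_p_mul hj fun _ => 1
    _ = 1 := by
        rw [← ENNReal.ofReal_tsum_of_nonneg (fun e => M.p_nonneg _ _) hsum, M.p_tsum_one j x hj,
          ENNReal.ofReal_one]

end Partition

section Operator

/-- The Markov operator `U` as a linear map. -/
noncomputable def markovEnd : Module.End ℝ≥0∞ (K → ℝ≥0∞) where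
  toFun := M.markovOp
  map_add' f g := by
    funext x
    simp [markovOp, mul_add, ENNReal.tsum_add]
  map_smul' c f := by
    funext x
    simp [markovOp, mul_left_comm _ c, ENNReal.tsum_mul_left]

lemma markovEnd_apply (f : K → ℝ≥0∞) (x : K) :
    M.markovEnd f x = ∑' e, ENNReal.ofReal (M.p e x) * f (M.w e x) := rfl

lemma markovEnd_one : M.markovEnd 1 = 1 := by
  funext x
  simp [markovEnd_apply, M.tsum_ofReal_p]

lemma measurable_ofReal_p (e : E) : Measurable fun x => ENNReal.ofReal (M.p e x) :=
  (M.p_measurable e).ennreal_ofReal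

variable {M} [Countable E]

lemma measurable_markovEnd {f : K → ℝ≥0∞} (hf : Measurable f) : Measurable (M.markovEnd f) :=
  Measurable.tsum fun e => (M.measurable_ofReal_p e).mul (hf.comp (M.w_measurable e))

lemma measurable_markovEnd_pow {f : K → ℝ≥0∞} (hf : Measurable f) (k : ℕ) :
    Measurable ((M.markovEnd ^ k) f) := by
  induction k with
  | zero => exact hf
  | succ k ih => rw [pow_succ']; exact measurable_markovEnd ih

lemma lintegral_adjOp {f : K → ℝ≥0∞} (hf : Measurable f) (ν : Measure K) :
    ∫⁻ x, f x ∂(M.adjOp ν) = ∫⁻ x, M.markovEnd f x ∂ν := by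
  have hcomp (e : E) : Measurable fun x => f (M.w e x) := hf.comp (M.w_measurable e)
  have hterm (e : E) : AEMeasurable (fun x => ENNReal.ofReal (M.p e x) * f (M.w e x)) ν :=
    ((M.measurable_ofReal_p e).mul (hcomp e)).aemeasurable
  simp only [markovEnd_apply, adjOp, lintegral_sum_measure, lintegral_tsum hterm]
  refine tsum_congr fun e => ?_
  rw [lintegral_map hf (M.w_measurable e)]
  exact lintegral_withDensity_eq_lintegral_mul _ (M.measurable_ofReal_p e) (hcomp e)

lemma lintegral_iterate_adjOp {f : K → ℝ≥0∞} (hf : Measurable f) (k : ℕ) (ν : Measure K) :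
    ∫⁻ x, f x ∂(M.adjOp^[k] ν) = ∫⁻ x, (M.markovEnd ^ k) f x ∂ν := by
  induction k generalizing ν with
  | zero => rfl
  | succ k ih =>
    rw [Function.iterate_succ_apply, ih, lintegral_adjOp (measurable_markovEnd_pow hf k), pow_succ']
    rfl

lemma iterate_adjOp_dirac {A : Set K} (hA : MeasurableSet A) (k : ℕ) (x : K) :
    (M.adjOp^[k] (Measure.dirac x)) A = (M.markovEnd ^ k) (A.indicator 1) x := by
  have hind : Measurable (A.indicator (1 : K → ℝ≥0∞)) := measurable_one.indicator hA
  rw [← lintegral_indicator_one hA, lintegral_iterate_adjOp hind,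
    lintegral_dirac' _ (measurable_markovEnd_pow hind k)]

end Operator

section Tightness

/-- The complement `⋃_{j ∉ V} K_j` of finitely many cells. -/
def tailSet (V : Finset N) : Set K := ⋃ j : {j : N // j ∉ V}, M.Kset j

variable {M}

lemma mem_tailSet {V : Finset N} {j : N} {x : K} (hx : x ∈ M.Kset j) :
    x ∈ M.tailSet V ↔ j ∉ V := by
  simp only [tailSet, Set.mem_iUnion, Subtype.exists, exists_prop]
  exact ⟨fun ⟨_, hj', hx'⟩ => eq_of_mem_Kset hx' hx ▸ hj', fun hj => ⟨j, hj, hx⟩⟩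

variable [Countable N]

lemma measurableSet_tailSet (V : Finset N) : MeasurableSet (M.tailSet V) :=
  MeasurableSet.iUnion fun _ => M.Kset_measurable _

lemma measure_tailSet (μ : Measure K) (V : Finset N) :
    μ (M.tailSet V) = ∑' j : {j : N // j ∉ V}, μ (M.Kset j) :=
  measure_iUnion (fun _ _ h => M.Kset_disjoint (Subtype.coe_ne_coe.2 h))
    fun _ => M.Kset_measurable _

lemma exists_measure_tailSet_le (μ : Measure K) [IsFiniteMeasure μ] {ε : ℝ≥0∞} (hε : ε ≠ 0) :
    ∃ V, μ (M.tailSet V) ≤ ε := by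
  have hfinite : ∑' j, μ (M.Kset j) ≠ ⊤ := by
    rw [← measure_iUnion M.Kset_disjoint M.Kset_measurable]
    exact measure_ne_top _ _
  simp only [measure_tailSet]
  exact ((ENNReal.tendsto_tsum_compl_atTop_zero hfinite).eventually
    (ge_mem_nhds (pos_iff_ne_zero.2 hε))).exists

lemma tsum_alphaMeas [Countable E] (x₀ : K) (n : ℕ) (V : Finset N) :
    ∑' j : {j : N // j ∉ V}, M.alphaMeas x₀ (n + 1) j
      = cesaroMean M.markovEnd n ((M.tailSet V).indicator 1) x₀ := by
  simp only [alphaMeas, ENNReal.tsum_mul_left, cesaroMean_apply]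
  rw [Summable.tsum_finsetSum fun _ _ => ENNReal.summable]
  simp only [← iterate_adjOp_dirac (measurableSet_tailSet V), measure_tailSet]

lemma conditionT_iff [Countable E] {x₀ : K} :
    M.ConditionT x₀ ↔ ∀ ε : ℝ≥0∞, ε ≠ 0 → ∃ V : Finset N,
      ∀ n, cesaroMean M.markovEnd n ((M.tailSet V).indicator 1) x₀ ≤ ε := by
  simp only [ConditionT, tsum_alphaMeas]
  constructor
  · intro h ε hε
    obtain ⟨δ, -, hδ0, hδ⟩ := ENNReal.lt_iff_exists_real_btwn.1 (pos_iff_ne_zero.2 hε)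
    obtain ⟨V, hV⟩ := h δ (ENNReal.ofReal_pos.1 hδ0)
    exact ⟨V, fun n => (hV n).le.trans hδ.le⟩
  · intro h ε hε
    obtain ⟨δ, hδ0, hδ⟩ := exists_between (ENNReal.ofReal_pos.2 hε)
    obtain ⟨V, hV⟩ := h δ hδ0.ne'
    exact ⟨V, fun n => (hV n).trans_lt hδ⟩

end Tightness

end MarkovSystem

/-! ### Invariance of the image of an equilibrium state -/

namespace MarkovSystem

variable {K : Type*} [MetricSpace K] [CompleteSpace K] [MeasurableSpace K] [BorelSpace K]
  {N E : Type*} [Countable E] {M : MarkovSystem K N E} {j0 : N} {xp : N → K}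
  {Λ : Measure (CodeSpace E)}

namespace IsEquilibrium

lemma setLIntegral_coord (hΛ : M.IsEquilibrium j0 xp Λ) (e : E) {g : CodeSpace E → ℝ≥0∞}
    (hg : Measurable[pastAlgebra E] g) :
    ∫⁻ σ in {σ | σ 1 = some e}, g σ ∂Λ
      = ∫⁻ σ, ENNReal.ofReal (M.p e (M.limCode j0 xp σ)) * g σ ∂Λ := by
  obtain ⟨_, -, hD, hcond⟩ := hΛ
  have hp : Measurable[pastAlgebra E] fun σ => M.p e (M.limCode j0 xp σ) :=
    (M.p_measurable e).comp measurable_limCode_past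
  have hcode : (fun σ => M.p e (M.code j0 xp σ)) =ᵐ[Λ] fun σ => M.p e (M.limCode j0 xp σ) := by
    filter_upwards [ae_mem_codeDomain hD] with σ hσ
    rw [code_eq_limCode hσ]
  exact setLIntegral_eq_lintegral_mul_of_density pastAlgebra_le
    (hp.mono pastAlgebra_le le_rfl).ennreal_ofReal
    ((condExp_coord_ae_eq_iff e hp (fun σ => ⟨M.p_nonneg e _, M.p_le_one e _⟩) hcode).1 (hcond e))
    hg

lemma ae_limCode_mem_Kset (hΛ : M.IsEquilibrium j0 xp Λ) (e : E) :
    ∀ᵐ σ ∂Λ, σ 1 = some e → M.limCode j0 xp σ ∈ M.Kset (M.i e) := by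
  let outside : Set (CodeSpace E) := M.limCode j0 xp ⁻¹' (M.Kset (M.i e))ᶜ
  have houtside : MeasurableSet[pastAlgebra E] outside :=
    measurable_limCode_past (M.Kset_measurable _).compl
  have hnull : ∫⁻ σ in {σ | σ 1 = some e}, outside.indicator 1 σ ∂Λ = 0 := by
    have hind : Measurable[pastAlgebra E] (outside.indicator (1 : CodeSpace E → ℝ≥0∞)) :=
      (@measurable_const _ _ _ (pastAlgebra E) (1 : ℝ≥0∞)).indicator houtside
    rw [hΛ.setLIntegral_coord e hind, ← lintegral_zero (μ := Λ)]
    refine lintegral_congr fun σ => ?_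
    by_cases hσ : M.limCode j0 xp σ ∈ M.Kset (M.i e)
    · simp [outside, hσ]
    · simp [M.p_zero_outside e _ hσ]
  rw [lintegral_indicator_one (pastAlgebra_le _ houtside),
    Measure.restrict_apply (pastAlgebra_le _ houtside)] at hnull
  filter_upwards [measure_eq_zero_iff_ae_notMem.1 hnull] with σ hσ he
  by_contra hK
  exact hσ ⟨hK, he⟩

lemma lintegral_markovEnd (hΛ : M.IsEquilibrium j0 xp Λ) (hxp : ∀ j, xp j ∈ M.Kset j)
    (huc : M.IsUniformlyContinuous) {f : K → ℝ≥0∞} (hf : Measurable f) :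
    ∫⁻ σ, M.markovEnd f (M.limCode j0 xp σ) ∂Λ = ∫⁻ σ, f (M.limCode j0 xp σ) ∂Λ := by
  have hprob := hΛ.1
  have hw (e : E) : Measurable[pastAlgebra E] fun σ => f (M.w e (M.limCode j0 xp σ)) :=
    (hf.comp (M.w_measurable e)).comp measurable_limCode_past
  have hp (e : E) : Measurable[pastAlgebra E] fun σ =>
      ENNReal.ofReal (M.p e (M.limCode j0 xp σ)) :=
    (M.measurable_ofReal_p e).comp measurable_limCode_past
  have hshift (e : E) : ∀ᵐ σ ∂Λ, σ ∈ {σ : CodeSpace E | σ 1 = some e} →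
      f (M.w e (M.limCode j0 xp σ)) = f (M.limCode j0 xp (shiftMap E σ)) := by
    filter_upwards [ae_mem_codeDomain hΛ.2.2.1, hΛ.ae_limCode_mem_Kset e] with σ hσ hK he
    rw [limCode_shiftMap hxp huc hσ he (hK he)]
  calc ∫⁻ σ, M.markovEnd f (M.limCode j0 xp σ) ∂Λ
      = ∑' e, ∫⁻ σ, ENNReal.ofReal (M.p e (M.limCode j0 xp σ))
          * f (M.w e (M.limCode j0 xp σ)) ∂Λ :=
        lintegral_tsum fun e => (((hp e).mul (hw e)).mono pastAlgebra_le le_rfl).aemeasurable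
    _ = ∑' e, ∫⁻ σ in {σ | σ 1 = some e}, f (M.w e (M.limCode j0 xp σ)) ∂Λ :=
        tsum_congr fun e => (hΛ.setLIntegral_coord e (hw e)).symm
    _ = ∑' e, ∫⁻ σ in {σ | σ 1 = some e}, f (M.limCode j0 xp (shiftMap E σ)) ∂Λ :=
        tsum_congr fun e => setLIntegral_congr_fun_ae (measurableSet_coord 1 (some e)) (hshift e)
    _ = ∫⁻ σ, f (M.limCode j0 xp (shiftMap E σ)) ∂Λ :=
        (lintegral_eq_tsum_coord (measure_coord_none_of_codeDomain hΛ.2.2.1 1) _).symm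
    _ = ∫⁻ σ, f (M.limCode j0 xp σ) ∂Λ := by
        conv_rhs => rw [← hΛ.2.1]
        exact (lintegral_map (hf.comp measurable_limCode) measurable_shiftMap).symm

theorem exists_conditionT [Countable N] (hΛ : M.IsEquilibrium j0 xp Λ)
    (hxp : ∀ j, xp j ∈ M.Kset j) (huc : M.IsUniformlyContinuous) : ∃ x₀, M.ConditionT x₀ := by
  have := hΛ.1
  let μ : Measure K := Λ.map (M.limCode j0 xp)
  have : IsProbabilityMeasure μ := Measure.isProbabilityMeasure_map measurable_limCode.aemeasurable
  have hμ (f : K → ℝ≥0∞) (hf : Measurable f) : ∫⁻ x, M.markovEnd f x ∂μ = ∫⁻ x, f x ∂μ := by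
    rw [lintegral_map (measurable_markovEnd hf) measurable_limCode,
      lintegral_map hf measurable_limCode, hΛ.lintegral_markovEnd hxp huc hf]
  obtain ⟨x₀, hx₀⟩ := exists_forall_exists_cesaroMean_le M.markovEnd_one
    (fun _ => measurable_markovEnd) hμ
    (f := fun V => (M.tailSet V).indicator 1)
    (fun V => measurable_one.indicator (measurableSet_tailSet V))
    (fun V => Set.indicator_le_self _ _)
    fun ε hε => by
      simpa only [lintegral_indicator_one (measurableSet_tailSet _)]
        using exists_measure_tailSet_le μ hε
  exact ⟨x₀, conditionT_iff.2 hx₀⟩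

end IsEquilibrium

end MarkovSystem

/-! ### Invariant means -/

section PositiveFunctionals

variable {X ι : Type*} (ℓ : (X → ℝ≥0∞) →ₗ[ℝ≥0] ℝ≥0∞) {f : ι → X → ℝ≥0∞}

lemma sum_map_le_map_tsum (f : ι → X → ℝ≥0∞) (F : Finset ι) :
    ∑ i ∈ F, ℓ (f i) ≤ ℓ fun x => ∑' i, f i x := by
  rw [← map_sum]
  refine monotone_of_map_add ℓ fun x => ?_
  rw [Finset.sum_apply]
  exact ENNReal.sum_le_tsum F

lemma tsum_map_le_map_tsum (f : ι → X → ℝ≥0∞) : ∑' i, ℓ (f i) ≤ ℓ fun x => ∑' i, f i x := by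
  rw [ENNReal.tsum_eq_iSup_sum]
  exact iSup_le (sum_map_le_map_tsum ℓ f)

lemma tsum_map_eq_map_tsum
    (hf : ∀ ε : ℝ≥0∞, ε ≠ 0 → ∃ F : Finset ι, ℓ (fun x => ∑' i : {i // i ∉ F}, f i x) ≤ ε) :
    ∑' i, ℓ (f i) = ℓ fun x => ∑' i, f i x := by
  refine le_antisymm (tsum_map_le_map_tsum ℓ f) (ENNReal.le_of_forall_pos_le_add fun ε hε _ => ?_)
  obtain ⟨F, hF⟩ := hf ε (ENNReal.coe_ne_zero.2 hε.ne')
  have hsplit : (fun x => ∑' i, f i x) = ∑ i ∈ F, f i + fun x => ∑' i : {i // i ∉ F}, f i x := by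
    funext x
    rw [Pi.add_apply, Finset.sum_apply]
    exact (ENNReal.sum_add_tsum_compl F fun i => f i x).symm
  rw [hsplit, map_add, map_sum]
  exact add_le_add (ENNReal.sum_le_tsum F) hF

lemma map_ennreal_smul {c : ℝ≥0∞} (hc : c ≠ ⊤) (f : X → ℝ≥0∞) : ℓ (c • f) = c * ℓ f := by
  lift c to ℝ≥0 using hc
  exact map_smul ℓ c f

lemma wordSum_map_le {E : Type*} (n : ℕ) (f : List E → X → ℝ≥0∞) :
    wordSum n (fun w => ℓ (f w)) ≤ ℓ fun x => wordSum n fun w => f w x :=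
  tsum_map_le_map_tsum ℓ fun v => f (List.ofFn v)

end PositiveFunctionals

namespace MarkovSystem

variable {K : Type*} [MetricSpace K] [MeasurableSpace K] {N E : Type*} (M : MarkovSystem K N E)

section WordWeight

/-- The probability `p_{e_0}(x) p_{e_1}(w_{e_0} x) ⋯` of following the word `e_0 e_1 ⋯` from `x`. -/
noncomputable def wordWeight : List E → K → ℝ≥0∞
  | [], _ => 1
  | e :: w, x => ENNReal.ofReal (M.p e x) * wordWeight w (M.w e x)

/-- The action `y ↦ w_{e_n} ∘ ⋯ ∘ w_{e_0} (y)` of the word `e_0 ⋯ e_n` on points. -/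
def actWord : List E → K → K
  | [], y => y
  | e :: w, y => actWord w (M.w e y)

variable {M}

lemma wordWeight_append (w v : List E) (x : K) :
    M.wordWeight (w ++ v) x = M.wordWeight w x * M.wordWeight v (M.actWord w x) := by
  induction w generalizing x with
  | nil => simp [wordWeight, actWord]
  | cons e w ih => simp only [List.cons_append, wordWeight, actWord, ih, mul_assoc]

lemma wordWeight_append_singleton (w : List E) (e : E) (x : K) :
    M.wordWeight (w ++ [e]) x = M.wordWeight w x * ENNReal.ofReal (M.p e (M.actWord w x)) := by
  simp [wordWeight_append, wordWeight]

lemma wordWeight_le_one (w : List E) : M.wordWeight w ≤ 1 := by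
  induction w with
  | nil => exact fun _ => le_rfl
  | cons e w ih =>
    exact fun x => mul_le_one' (ENNReal.ofReal_le_one.2 (M.p_le_one e x)) (ih _)

lemma markovEnd_pow_apply (n : ℕ) (f : K → ℝ≥0∞) (x : K) :
    (M.markovEnd ^ n) f x = wordSum n fun w => M.wordWeight w x * f (M.actWord w x) := by
  induction n generalizing x with
  | zero => simp [wordSum_zero, wordWeight, actWord]
  | succ n ih =>
    rw [pow_succ', wordSum_succ]
    refine tsum_congr fun e => ?_
    rw [ih, ← wordSum_const_mul]
    exact wordSum_congr fun w _ => by simp only [wordWeight, actWord, mul_assoc]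

lemma wordWeight_mul_le_markovEnd_pow (w : List E) (f : K → ℝ≥0∞) (x : K) :
    M.wordWeight w x * f (M.actWord w x) ≤ (M.markovEnd ^ w.length) f x := by
  rw [markovEnd_pow_apply]
  refine (le_of_eq ?_).trans (ENNReal.le_tsum w.get)
  simp only [List.ofFn_get]

end WordWeight

section EdgeTail

/-- The probability of leaving a point along an edge outside the finite set `F`. -/
noncomputable def edgeTail (F : Finset E) (x : K) : ℝ≥0∞ :=
  ∑' e : {e // e ∉ F}, ENNReal.ofReal (M.p e x)

variable {M}

lemma edgeTail_le_one (F : Finset E) : M.edgeTail F ≤ 1 := fun x =>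
  (ENNReal.tsum_comp_le_tsum_of_injective Subtype.val_injective _).trans_eq (M.tsum_ofReal_p x)

lemma exists_edgeTail_le (hdom : M.HasDominatingChain) (V : Finset N) {ε : ℝ≥0∞} (hε : ε ≠ 0) :
    ∃ F : Finset E, ∀ x ∉ M.tailSet V, M.edgeTail F x ≤ ε := by
  let bound (j : N) : E → ℝ≥0∞ :=
    {e | M.i e = j}.indicator fun e => ⨆ x ∈ M.Kset j, ENNReal.ofReal (M.p e x)
  have hsum : ∑' e, ∑ j ∈ V, bound j e = ∑ j ∈ V, M.xi j := by
    rw [Summable.tsum_finsetSum fun _ _ => ENNReal.summable]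
    exact Finset.sum_congr rfl fun j _ => (tsum_subtype {e : E | M.i e = j} _).symm
  have hfinite : ∑' e, ∑ j ∈ V, bound j e ≠ ⊤ := hsum ▸ ENNReal.sum_ne_top.2 fun j _ => hdom j
  obtain ⟨F, hF⟩ := ((ENNReal.tendsto_tsum_compl_atTop_zero hfinite).eventually
    (ge_mem_nhds (pos_iff_ne_zero.2 hε))).exists
  refine ⟨F, fun x hx => (ENNReal.tsum_le_tsum fun e => ?_).trans hF⟩
  obtain ⟨j, hj⟩ := M.exists_mem_Kset x
  have hjV : j ∈ V := not_not.1 fun h => hx ((mem_tailSet hj).2 h)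
  by_cases hp : M.p e x = 0
  · simp [hp]
  have he : M.i e = j := eq_of_mem_Kset (mem_Kset_of_p_ne_zero hp) hj
  calc ENNReal.ofReal (M.p e x)
      ≤ ⨆ x ∈ M.Kset j, ENNReal.ofReal (M.p e x) := le_iSup₂_of_le x hj le_rfl
    _ = bound j e := (Set.indicator_of_mem (s := {e | M.i e = j}) he
        fun e => ⨆ x ∈ M.Kset j, ENNReal.ofReal (M.p e x)).symm
    _ ≤ ∑ j ∈ V, bound j e :=
        Finset.single_le_sum (f := fun j => bound j e) (fun _ _ => zero_le) hjV

end EdgeTail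

section InvariantMean

/-- An invariant mean of the Markov system: a finitely additive integral of total mass one which
is invariant under `U` on functions with values in `[0, 1]` and, up to arbitrarily little mass,
only sees finitely many edges. -/
structure IsInvariantMean (ℓ : (K → ℝ≥0∞) →ₗ[ℝ≥0] ℝ≥0∞) : Prop where
  map_one : ℓ 1 = 1
  map_markovEnd : ∀ f ≤ 1, ℓ (M.markovEnd f) = ℓ f
  exists_edgeTail_le : ∀ ε : ℝ≥0∞, ε ≠ 0 → ∃ F : Finset E, ℓ (M.edgeTail F) ≤ ε

variable {M} {ℓ : (K → ℝ≥0∞) →ₗ[ℝ≥0] ℝ≥0∞}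

lemma isInvariantMean_cesaroLim [Countable N] [Countable E] (hdom : M.HasDominatingChain) {x₀ : K}
    (hT : M.ConditionT x₀) : M.IsInvariantMean (cesaroLim M.markovEnd x₀) where
  map_one := cesaroLim_one M.markovEnd_one
  map_markovEnd f hf := cesaroLim_map M.markovEnd_one hf
  exists_edgeTail_le ε hε := by
    obtain ⟨δ, hδ0, hδ⟩ := ENNReal.lt_iff_exists_nnreal_btwn.1 (ENNReal.half_pos hε)
    obtain ⟨V, hV⟩ := conditionT_iff.1 hT δ hδ0.ne'
    obtain ⟨F, hF⟩ := exists_edgeTail_le hdom V hδ0.ne'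
    have hle : M.edgeTail F ≤ (M.tailSet V).indicator 1 + δ • 1 := by
      intro x
      by_cases hx : x ∈ M.tailSet V
      · exact (edgeTail_le_one F x).trans (by simp [hx])
      · exact (hF x hx).trans (by simp [hx, ENNReal.smul_def])
    refine ⟨F, (monotone_of_map_add (cesaroLim M.markovEnd x₀) hle).trans ?_⟩
    rw [map_add, map_smul, cesaroLim_one M.markovEnd_one, ENNReal.smul_def, smul_eq_mul, mul_one]
    exact (add_le_add ((cesaroLim_le hV).trans hδ.le) hδ.le).trans_eq (ENNReal.add_halves ε)

namespace IsInvariantMean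

lemma map_markovEnd_pow (hℓ : M.IsInvariantMean ℓ) {f : K → ℝ≥0∞} (hf : f ≤ 1) (k : ℕ) :
    ℓ ((M.markovEnd ^ k) f) = ℓ f := by
  induction k with
  | zero => rfl
  | succ k ih =>
    rw [pow_succ', ← ih]
    exact hℓ.map_markovEnd _ (pow_apply_le_one M.markovEnd_one k hf)

lemma tsum_map_eq (hℓ : M.IsInvariantMean ℓ) {f : E → K → ℝ≥0∞}
    (hf : ∀ F : Finset E, ℓ (fun x => ∑' e : {e // e ∉ F}, f e x) ≤ ℓ (M.edgeTail F)) :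
    ∑' e, ℓ (f e) = ℓ fun x => ∑' e, f e x :=
  tsum_map_eq_map_tsum ℓ fun ε hε =>
    (hℓ.exists_edgeTail_le ε hε).imp fun F hF => (hf F).trans hF

lemma isStationaryWeight (hℓ : M.IsInvariantMean ℓ) :
    IsStationaryWeight fun w => ℓ (M.wordWeight w) where
  nil := hℓ.map_one
  tsum_append w := by
    rw [hℓ.tsum_map_eq fun F => ?_]
    · simp only [wordWeight_append_singleton, ENNReal.tsum_mul_left, tsum_ofReal_p, mul_one]
    · rw [← hℓ.map_markovEnd_pow (edgeTail_le_one F) w.length]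
      refine monotone_of_map_add ℓ fun x => ?_
      simp only [wordWeight_append_singleton, ENNReal.tsum_mul_left]
      exact wordWeight_mul_le_markovEnd_pow w (M.edgeTail F) x
  tsum_cons w := by
    rw [hℓ.tsum_map_eq fun F => monotone_of_map_add ℓ fun x =>
      ENNReal.tsum_le_tsum fun e => mul_le_of_le_one_right' (wordWeight_le_one w _)]
    exact hℓ.map_markovEnd _ (wordWeight_le_one w)

end IsInvariantMean

end InvariantMean

end MarkovSystem

/-! ### Contraction along words -/

namespace MarkovSystem

variable {K : Type*} [MetricSpace K] [MeasurableSpace K] {N E : Type*} {M : MarkovSystem K N E}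
  {j0 : N} {xp : N → K} {a : ℝ}

section Contraction

lemma tsum_p_mul_edist_le (hcon : M.IsContractive a) {j : N} {x y : K} (hx : x ∈ M.Kset j)
    (hy : y ∈ M.Kset j) :
    ∑' e, ENNReal.ofReal (M.p e x) * edist (M.w e x) (M.w e y) ≤ ENNReal.ofReal a * edist x y := by
  rw [tsum_ofReal_p_mul hx]
  simpa only [ENNReal.ofReal_mul' dist_nonneg, ← edist_dist] using hcon j x hx y hy

lemma wordSum_edist_actWord_le (hcon : M.IsContractive a) (n : ℕ) {j : N} {x y : K}
    (hx : x ∈ M.Kset j) (hy : y ∈ M.Kset j) :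
    wordSum n (fun w => M.wordWeight w x * edist (M.actWord w x) (M.actWord w y))
      ≤ ENNReal.ofReal a ^ n * edist x y := by
  induction n generalizing j x y with
  | zero => simp [wordSum_zero, wordWeight, actWord]
  | succ n ih =>
    have hstep (e : E) : wordSum n (fun w => M.wordWeight (e :: w) x
          * edist (M.actWord (e :: w) x) (M.actWord (e :: w) y))
        ≤ ENNReal.ofReal a ^ n * (ENNReal.ofReal (M.p e x) * edist (M.w e x) (M.w e y)) := by
      simp only [wordWeight, actWord, mul_assoc, wordSum_const_mul]
      by_cases hp : M.p e x = 0
      · simp [hp]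
      obtain rfl := eq_of_mem_Kset (mem_Kset_of_p_ne_zero hp) hx
      rw [mul_left_comm]
      exact mul_le_mul_right (ih (M.w_mapsTo e hx) (M.w_mapsTo e hy)) _
    rw [wordSum_succ]
    refine (ENNReal.tsum_le_tsum hstep).trans ?_
    rw [ENNReal.tsum_mul_left, pow_succ, mul_assoc]
    exact mul_le_mul_right (tsum_p_mul_edist_le hcon hx hy) _

lemma Lfun_eq_edist {j : N} {x : K} (hx : x ∈ M.Kset j) : M.Lfun xp x = edist x (xp j) := by
  unfold Lfun
  rw [tsum_eq_single j fun j' hne =>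
    Set.indicator_of_notMem (fun h => hne (eq_of_mem_Kset h hx)) _, Set.indicator_of_mem hx,
    edist_dist]

lemma Lfun_ne_top (x : K) : M.Lfun xp x ≠ ⊤ := by
  obtain ⟨j, hx⟩ := M.exists_mem_Kset x
  exact Lfun_eq_edist hx ▸ edist_ne_top x (xp j)

lemma tsum_p_mul_edist_basepoint_le (x : K) :
    ∑' e, ENNReal.ofReal (M.p e x) * edist (M.w e (xp (M.i e))) (xp (M.t e)) ≤ M.bConst xp := by
  obtain ⟨j, hx⟩ := M.exists_mem_Kset x
  rw [tsum_ofReal_p_mul hx]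
  refine le_trans (le_of_eq ?_) (le_iSup_of_le j (le_iSup₂_of_le x hx le_rfl))
  simp only [ENNReal.ofReal_mul' dist_nonneg, ← edist_dist]

lemma markovEnd_Lfun_le (hxp : ∀ j, xp j ∈ M.Kset j) (hcon : M.IsContractive a) :
    M.markovEnd (M.Lfun xp) ≤ ENNReal.ofReal a • M.Lfun xp + M.bConst xp • 1 := by
  intro x
  obtain ⟨j, hx⟩ := M.exists_mem_Kset x
  simp only [Pi.add_apply, Pi.smul_apply, smul_eq_mul, Pi.one_apply, mul_one, Lfun_eq_edist hx,
    markovEnd_apply]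
  refine le_trans ?_ (add_le_add (tsum_p_mul_edist_le hcon hx (hxp j))
    (tsum_p_mul_edist_basepoint_le x))
  rw [← ENNReal.tsum_add]
  refine ENNReal.tsum_le_tsum fun e => ?_
  by_cases hp : M.p e x = 0
  · simp [hp]
  obtain rfl := eq_of_mem_Kset (mem_Kset_of_p_ne_zero hp) hx
  rw [Lfun_eq_edist (M.w_mapsTo e hx), ← mul_add]
  exact mul_le_mul_right (edist_triangle _ _ _) _

lemma cesaroLim_Lfun_ne_top (hxp : ∀ j, xp j ∈ M.Kset j) (hcon : M.IsContractive a) (ha : a < 1)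
    (hb : M.bConst xp ≠ ⊤) (x₀ : K) : cesaroLim M.markovEnd x₀ (M.Lfun xp) ≠ ⊤ :=
  cesaroLim_ne_top_of_drift M.markovEnd_one (markovEnd_Lfun_le hxp hcon)
    (ENNReal.ofReal_lt_one.2 ha) hb (Lfun_ne_top x₀)

lemma IsInvariantMean.map_markovEnd_Lfun_ne_top {ℓ : (K → ℝ≥0∞) →ₗ[ℝ≥0] ℝ≥0∞}
    (hℓ : M.IsInvariantMean ℓ) (hxp : ∀ j, xp j ∈ M.Kset j) (hcon : M.IsContractive a)
    (hb : M.bConst xp ≠ ⊤) (hL : ℓ (M.Lfun xp) ≠ ⊤) : ℓ (M.markovEnd (M.Lfun xp)) ≠ ⊤ := by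
  refine ne_top_of_le_ne_top ?_ (monotone_of_map_add ℓ (markovEnd_Lfun_le hxp hcon))
  rw [map_add, map_ennreal_smul ℓ ENNReal.ofReal_ne_top, map_ennreal_smul ℓ hb, hℓ.map_one, mul_one]
  exact ENNReal.add_ne_top.2 ⟨ENNReal.mul_ne_top ENNReal.ofReal_ne_top hL, hb⟩

end Contraction

section OrbitWords

/-- The endpoint of the path along the word `w` that starts at the base point of its initial
vertex. -/
noncomputable def orbWord (M : MarkovSystem K N E) (j0 : N) (xp : N → K) (w : List E) : K :=
  M.actWord w (xp (M.iext j0 w.head?))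

lemma iterW_eq_actWord {σ : CodeSpace E} {n : ℕ} {w : List E} (hw : w.length = n + 1)
    (hσ : σ ∈ cylSetL (-(n : ℤ)) (w.map some)) (y : K) : M.iterW σ n y = M.actWord w y := by
  induction n generalizing w y with
  | zero =>
    obtain ⟨e, rfl⟩ := List.length_eq_one_iff.1 hw
    have h0 : σ 0 = some e := by simpa [cylSetL_singleton] using hσ
    simp [iterW, wext, h0, actWord]
  | succ n ih =>
    obtain ⟨e, w, rfl⟩ := List.exists_cons_of_length_eq_add_one hw
    rw [List.map_cons, mem_cylSetL_cons, show -((n + 1 : ℕ) : ℤ) + 1 = -(n : ℤ) by push_cast; ring,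
      Nat.cast_succ] at hσ
    rw [iterW, hσ.1, ih (by simpa using hw) hσ.2]
    rfl

lemma orbit_eq_orbWord {σ : CodeSpace E} {n : ℕ} {w : List E} (hw : w.length = n + 1)
    (hσ : σ ∈ cylSetL (-(n : ℤ)) (w.map some)) : M.orbit j0 xp σ n = M.orbWord j0 xp w := by
  rw [orbit, iterW_eq_actWord hw hσ, orbWord]
  obtain ⟨e, w, rfl⟩ := List.exists_cons_of_length_eq_add_one hw
  rw [List.map_cons, mem_cylSetL_cons] at hσ
  rw [hσ.1, List.head?_cons]

lemma orbWord_eq_actWord {j : N} {x : K} (hx : x ∈ M.Kset j) {w : List E} (hw : w ≠ [])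
    (hx0 : M.wordWeight w x ≠ 0) : M.orbWord j0 xp w = M.actWord w (xp j) := by
  obtain ⟨e, w, rfl⟩ := List.exists_cons_of_ne_nil hw
  have hp : M.p e x ≠ 0 := fun h => hx0 (by simp [wordWeight, h])
  rw [orbWord, ← eq_of_mem_Kset (mem_Kset_of_p_ne_zero hp) hx]
  rfl

lemma wordSum_edist_orbWord_le (hxp : ∀ j, xp j ∈ M.Kset j) (hcon : M.IsContractive a) (n : ℕ)
    (x : K) :
    wordSum (n + 1) (fun w => M.wordWeight w x * edist (M.actWord w x) (M.orbWord j0 xp w))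
      ≤ ENNReal.ofReal a ^ (n + 1) * M.Lfun xp x := by
  obtain ⟨j, hx⟩ := M.exists_mem_Kset x
  rw [Lfun_eq_edist hx]
  refine le_trans (wordSum_mono fun w hw => ?_)
    (wordSum_edist_actWord_le hcon (n + 1) hx (hxp j))
  by_cases hx0 : M.wordWeight w x = 0
  · simp [hx0]
  · rw [orbWord_eq_actWord hx (List.ne_nil_of_length_eq_add_one hw) hx0]

lemma wordSum_edist_orbWord_tail_le (hxp : ∀ j, xp j ∈ M.Kset j) (hcon : M.IsContractive a)
    (n : ℕ) (x : K) :
    wordSum (n + 2) (fun w => M.wordWeight w x * edist (M.actWord w x) (M.orbWord j0 xp w.tail))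
      ≤ ENNReal.ofReal a ^ (n + 1) * M.markovEnd (M.Lfun xp) x := by
  rw [wordSum_succ, markovEnd_apply, ← ENNReal.tsum_mul_left]
  refine ENNReal.tsum_le_tsum fun e => ?_
  simp only [wordWeight, actWord, List.tail_cons, mul_assoc, wordSum_const_mul]
  rw [mul_left_comm]
  exact mul_le_mul_right (wordSum_edist_orbWord_le hxp hcon n (M.w e x)) _

lemma wordSum_edist_orbWord_succ_le (hxp : ∀ j, xp j ∈ M.Kset j) (hcon : M.IsContractive a)
    (ha : a < 1) (n : ℕ) (x : K) :
    wordSum (n + 2) (fun w => M.wordWeight w x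
        * edist (M.orbWord j0 xp w.tail) (M.orbWord j0 xp w))
      ≤ ENNReal.ofReal a ^ (n + 1) * (M.markovEnd (M.Lfun xp) + M.Lfun xp) x := by
  calc wordSum (n + 2) (fun w => M.wordWeight w x
        * edist (M.orbWord j0 xp w.tail) (M.orbWord j0 xp w))
      ≤ wordSum (n + 2) (fun w => M.wordWeight w x
            * edist (M.actWord w x) (M.orbWord j0 xp w.tail)
          + M.wordWeight w x * edist (M.actWord w x) (M.orbWord j0 xp w)) :=
        wordSum_mono fun w _ => by
          rw [← mul_add]
          exact mul_le_mul_right (edist_triangle_left _ _ _) _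
    _ ≤ ENNReal.ofReal a ^ (n + 1) * M.markovEnd (M.Lfun xp) x
          + ENNReal.ofReal a ^ (n + 2) * M.Lfun xp x := by
        rw [wordSum_add]
        exact add_le_add (wordSum_edist_orbWord_tail_le hxp hcon n x)
          (wordSum_edist_orbWord_le hxp hcon (n + 1) x)
    _ ≤ ENNReal.ofReal a ^ (n + 1) * (M.markovEnd (M.Lfun xp) + M.Lfun xp) x := by
        rw [Pi.add_apply, mul_add]
        exact add_le_add_right (mul_le_mul_left (pow_le_pow_right_of_le_one'
          (ENNReal.ofReal_le_one.2 ha.le) (Nat.le_succ _)) _) _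

end OrbitWords

section Support

variable {ℓ : (K → ℝ≥0∞) →ₗ[ℝ≥0] ℝ≥0∞} {Λ : Measure (CodeSpace E)}

lemma setLIntegral_cylSetL_eq (hΛ : HasCylinderWeights Λ fun w => ℓ (M.wordWeight w)) {m : ℤ}
    {w : List E} {c : ℝ≥0∞} {f : CodeSpace E → ℝ≥0∞}
    (hf : ∀ σ ∈ cylSetL m (w.map some), f σ = c) (hc : c ≠ ⊤) :
    ∫⁻ σ in cylSetL m (w.map some), f σ ∂Λ = ℓ fun x => M.wordWeight w x * c := by
  rw [setLIntegral_congr_fun (measurableSet_cylSetL _ _) hf, setLIntegral_const, hΛ,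
    ← map_ennreal_smul ℓ hc]
  exact congrArg ℓ (funext fun x => mul_comm _ _)

variable [Countable E] [IsProbabilityMeasure Λ]

lemma ae_mem_pathSpace (hℓ : M.IsInvariantMean ℓ)
    (hΛ : HasCylinderWeights Λ fun w => ℓ (M.wordWeight w)) : ∀ᵐ σ ∂Λ, σ ∈ M.pathSpace := by
  have hletter : ∀ᵐ σ ∂Λ, ∀ k : ℤ, σ k ≠ none := ae_all_iff.2 fun k => by
    simpa [ae_iff] using hΛ.measure_coord_none hℓ.isStationaryWeight k
  have hedge : ∀ᵐ σ ∂Λ, ∀ (n : ℤ) (e e' : E), M.i e' ≠ M.t e →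
      σ ∉ cylSetL n ([e, e'].map some) := by
    simp only [ae_all_iff]
    intro n e e' he
    refine measure_eq_zero_iff_ae_notMem.1 ?_
    rw [hΛ, ← map_zero ℓ]
    refine congrArg ℓ (funext fun x => ?_)
    by_contra hx
    simp only [wordWeight, mul_one, Pi.zero_apply, mul_eq_zero, not_or, ENNReal.ofReal_eq_zero,
      not_le] at hx
    exact he (eq_of_mem_Kset (mem_Kset_of_p_ne_zero hx.2.ne')
      (M.w_mapsTo e (mem_Kset_of_p_ne_zero hx.1.ne')))
  filter_upwards [hletter, hedge] with σ hσ hσ' n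
  obtain ⟨e, he⟩ := Option.ne_none_iff_exists'.1 (hσ n)
  obtain ⟨e', he'⟩ := Option.ne_none_iff_exists'.1 (hσ (n + 1))
  refine ⟨e, e', he, he', ?_⟩
  by_contra hne
  exact hσ' n e e' hne (by simp [cylSetL_cons, cylSetL_nil, he, he'])

lemma lintegral_edist_orbit_le (hℓ : M.IsInvariantMean ℓ)
    (hΛ : HasCylinderWeights Λ fun w => ℓ (M.wordWeight w)) (hxp : ∀ j, xp j ∈ M.Kset j)
    (hcon : M.IsContractive a) (ha : a < 1) (n : ℕ) :
    ∫⁻ σ, edist (M.orbit j0 xp σ n) (M.orbit j0 xp σ (n + 1)) ∂Λ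
      ≤ ENNReal.ofReal a ^ (n + 1) * ℓ (M.markovEnd (M.Lfun xp) + M.Lfun xp) := by
  have hcyl (w : List E) (hw : w.length = n + 2) :
      ∫⁻ σ in cylSetL (-((n + 1 : ℕ) : ℤ)) (w.map some),
          edist (M.orbit j0 xp σ n) (M.orbit j0 xp σ (n + 1)) ∂Λ
        = ℓ fun x => M.wordWeight w x * edist (M.orbWord j0 xp w.tail) (M.orbWord j0 xp w) := by
    refine setLIntegral_cylSetL_eq hΛ (fun σ hσ => ?_) (edist_ne_top _ _)
    rw [orbit_eq_orbWord hw hσ]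
    obtain ⟨e, w, rfl⟩ := List.exists_cons_of_length_eq_add_one hw
    rw [List.map_cons, mem_cylSetL_cons,
      show -((n + 1 : ℕ) : ℤ) + 1 = -(n : ℤ) by push_cast; ring] at hσ
    rw [orbit_eq_orbWord (by simpa using hw) hσ.2, List.tail_cons]
  rw [lintegral_eq_wordSum (hΛ.measure_coord_none hℓ.isStationaryWeight) (n + 2)
    (-((n + 1 : ℕ) : ℤ)), wordSum_congr hcyl,
    ← map_ennreal_smul ℓ (ENNReal.pow_ne_top ENNReal.ofReal_ne_top)]
  exact (wordSum_map_le ℓ _ _).trans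
    (monotone_of_map_add ℓ (wordSum_edist_orbWord_succ_le hxp hcon ha n))

lemma measure_codeDomain [CompleteSpace K] (hℓ : M.IsInvariantMean ℓ)
    (hΛ : HasCylinderWeights Λ fun w => ℓ (M.wordWeight w)) (hxp : ∀ j, xp j ∈ M.Kset j)
    (hcon : M.IsContractive a) (ha : a < 1) (hb : M.bConst xp ≠ ⊤) (hL : ℓ (M.Lfun xp) ≠ ⊤) :
    Λ (M.codeDomain j0 xp) = 1 := by
  have hmeas (n : ℕ) :
      Measurable fun σ => edist (M.orbit j0 xp σ n) (M.orbit j0 xp σ (n + 1)) :=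
    (measurable_pastAlgebra (n + 1) fun σ τ h => by
      rw [orbit_congr h, orbit_congr fun k hk => h k (Nat.le_succ_of_le hk)]).mono
        pastAlgebra_le le_rfl
  have hfinite : ∫⁻ σ, ∑' n, edist (M.orbit j0 xp σ n) (M.orbit j0 xp σ (n + 1)) ∂Λ ≠ ⊤ := by
    rw [lintegral_tsum fun n => (hmeas n).aemeasurable]
    refine ne_top_of_le_ne_top ?_
      (ENNReal.tsum_le_tsum (lintegral_edist_orbit_le hℓ hΛ hxp hcon ha))
    have hα : 1 - ENNReal.ofReal a ≠ 0 := (tsub_pos_iff_lt.2 (ENNReal.ofReal_lt_one.2 ha)).ne'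
    simp only [pow_succ, ENNReal.tsum_mul_right, ENNReal.tsum_geometric, map_add]
    exact ENNReal.mul_ne_top
      (ENNReal.mul_ne_top (ENNReal.inv_ne_top.2 hα) ENNReal.ofReal_ne_top)
      (ENNReal.add_ne_top.2 ⟨hℓ.map_markovEnd_Lfun_ne_top hxp hcon hb hL, hL⟩)
  refine (mem_ae_iff_prob_eq_one measurableSet_codeDomain).1 ?_
  filter_upwards [ae_mem_pathSpace hℓ hΛ, ae_lt_top (Measurable.tsum hmeas) hfinite]
    with σ hσ hlt
  exact ⟨hσ, cauchySeq_tendsto_of_complete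
    (cauchySeq_of_edist_le_of_tsum_ne_top _ (fun n => le_rfl) hlt.ne)⟩

end Support

end MarkovSystem

/-! ### Existence of asymptotic states -/

namespace MarkovSystem

variable {K : Type*} [MetricSpace K] [MeasurableSpace K] {N E : Type*} {M : MarkovSystem K N E}
  {j0 : N} {xp : N → K} {a : ℝ} {ℓ : (K → ℝ≥0∞) →ₗ[ℝ≥0] ℝ≥0∞} {Λ : Measure (CodeSpace E)}
  {pbar : E → K → ℝ}

section TransitionError

lemma exists_actWord_mem {j : N} {x y : K} (hx : x ∈ M.Kset j) (hy : y ∈ M.Kset j) {w : List E}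
    (h : M.wordWeight w x ≠ 0) :
    ∃ j', M.actWord w x ∈ M.Kset j' ∧ M.actWord w y ∈ M.Kset j' := by
  induction w generalizing j x y with
  | nil => exact ⟨j, hx, hy⟩
  | cons e w ih =>
    have hp : M.p e x ≠ 0 := fun h0 => h (by simp [wordWeight, h0])
    obtain rfl := eq_of_mem_Kset (mem_Kset_of_p_ne_zero hp) hx
    exact ih (M.w_mapsTo e hx) (M.w_mapsTo e hy) (right_ne_zero_of_mul h)

lemma exists_abs_p_sub_le (huc : M.IsUniformlyContinuous) (e : E) {ε : ℝ} (hε : 0 < ε) :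
    ∃ c : ℝ, ∀ (j : N) (u v : K), u ∈ M.Kset j → v ∈ M.Kset j →
      ENNReal.ofReal |M.p e u - M.p e v| ≤ ENNReal.ofReal ε + ENNReal.ofReal c * edist u v := by
  obtain ⟨δ, hδ, h⟩ := Metric.uniformContinuousOn_iff.1 (huc e).2 ε hε
  refine ⟨δ⁻¹, fun j u v hu hv => ?_⟩
  have hnonneg : 0 ≤ δ⁻¹ * dist u v := by positivity
  rw [edist_dist, ← ENNReal.ofReal_mul (inv_nonneg.2 hδ.le), ← ENNReal.ofReal_add hε.le hnonneg]
  refine ENNReal.ofReal_le_ofReal ?_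
  by_cases hj : j = M.i e
  · subst hj
    rcases lt_or_ge (dist u v) δ with hnear | hfar
    · exact (h u hu v hv hnear).le.trans (le_add_of_nonneg_right hnonneg)
    · have hdist : 1 ≤ δ⁻¹ * dist u v := (one_le_inv_mul₀ hδ).2 hfar
      have hosc : |M.p e u - M.p e v| ≤ 1 :=
        abs_sub_le_of_le_of_le (M.p_nonneg e u) (M.p_le_one e u) (M.p_nonneg e v)
          (M.p_le_one e v) |>.trans_eq (sub_zero 1)
      linarith
  · rw [M.p_zero_outside e u fun h => hj (eq_of_mem_Kset hu h),
      M.p_zero_outside e v fun h => hj (eq_of_mem_Kset hv h), sub_self, abs_zero]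
    linarith

/-- The expected error of evaluating `p_e` at the endpoint of the path along a random word of
length `m + 1` which starts at a base point, instead of the endpoint of the path from `x`. -/
noncomputable def transitionError (M : MarkovSystem K N E) (j0 : N) (xp : N → K) (e : E) (m : ℕ)
    (x : K) : ℝ≥0∞ :=
  wordSum (m + 1) fun w => M.wordWeight w x
    * ENNReal.ofReal |M.p e (M.actWord w x) - M.p e (M.orbWord j0 xp w)|

lemma wordSum_wordWeight (n : ℕ) (x : K) : wordSum n (fun w => M.wordWeight w x) = 1 := by
  have h := markovEnd_pow_apply (M := M) n 1 x
  simpa [pow_apply_one M.markovEnd_one] using h.symm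

lemma transitionError_le (hxp : ∀ j, xp j ∈ M.Kset j) (hcon : M.IsContractive a) {e : E}
    {ε c : ℝ≥0∞} (hc : ∀ (j : N) (u v : K), u ∈ M.Kset j → v ∈ M.Kset j →
      ENNReal.ofReal |M.p e u - M.p e v| ≤ ε + c * edist u v) (m : ℕ) :
    M.transitionError j0 xp e m ≤ ε • 1 + (c * ENNReal.ofReal a ^ (m + 1)) • M.Lfun xp := by
  intro x
  obtain ⟨j, hx⟩ := M.exists_mem_Kset x
  calc M.transitionError j0 xp e m x
      ≤ wordSum (m + 1) (fun w => ε * M.wordWeight w x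
          + c * (M.wordWeight w x * edist (M.actWord w x) (M.orbWord j0 xp w))) := by
        refine wordSum_mono fun w hw => ?_
        by_cases h0 : M.wordWeight w x = 0
        · simp [h0]
        · rw [orbWord_eq_actWord hx (List.ne_nil_of_length_eq_add_one hw) h0]
          obtain ⟨j', hx', hxp'⟩ := exists_actWord_mem hx (hxp j) h0
          rw [mul_comm ε, mul_left_comm, ← mul_add]
          exact mul_le_mul_right (hc j' _ _ hx' hxp') _
    _ ≤ ε + c * (ENNReal.ofReal a ^ (m + 1) * M.Lfun xp x) := by
        rw [wordSum_add, wordSum_const_mul, wordSum_const_mul, wordSum_wordWeight, mul_one]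
        exact add_le_add_right (mul_le_mul_right (wordSum_edist_orbWord_le hxp hcon m x) _) _
    _ = (ε • 1 + (c * ENNReal.ofReal a ^ (m + 1)) • M.Lfun xp) x := by
        simp [mul_assoc]

lemma IsInvariantMean.tendsto_transitionError (hℓ : M.IsInvariantMean ℓ)
    (hxp : ∀ j, xp j ∈ M.Kset j) (hcon : M.IsContractive a) (ha : a < 1)
    (huc : M.IsUniformlyContinuous) (hL : ℓ (M.Lfun xp) ≠ ⊤) (e : E) :
    Tendsto (fun m => ℓ (M.transitionError j0 xp e m)) atTop (𝓝 0) := by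
  refine ENNReal.tendsto_nhds_zero.2 fun ε hε => ?_
  obtain ⟨δ, hδ0, hδ⟩ := ENNReal.lt_iff_exists_nnreal_btwn.1 (ENNReal.half_pos hε.ne')
  obtain ⟨c, hc⟩ := exists_abs_p_sub_le huc e (NNReal.coe_pos.2 (ENNReal.coe_pos.1 hδ0))
  rw [ENNReal.ofReal_coe_nnreal] at hc
  have hpow (m : ℕ) : ENNReal.ofReal c * ENNReal.ofReal a ^ (m + 1) ≠ ⊤ :=
    ENNReal.mul_ne_top ENNReal.ofReal_ne_top (ENNReal.pow_ne_top ENNReal.ofReal_ne_top)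
  have hgeom : Tendsto (fun m : ℕ => ENNReal.ofReal c * ENNReal.ofReal a ^ (m + 1)
      * ℓ (M.Lfun xp)) atTop (𝓝 0) := by
    have h := (ENNReal.tendsto_pow_atTop_nhds_zero_of_lt_one
      (ENNReal.ofReal_lt_one.2 ha)).comp (tendsto_add_atTop_nat 1)
    simpa using ENNReal.Tendsto.mul_const (ENNReal.Tendsto.const_mul h
      (Or.inr (ENNReal.ofReal_ne_top (r := c)))) (Or.inr hL)
  filter_upwards [hgeom.eventually (ge_mem_nhds (ENNReal.half_pos hε.ne'))] with m hm
  calc ℓ (M.transitionError j0 xp e m)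
      ≤ ℓ ((δ : ℝ≥0∞) • 1 + (ENNReal.ofReal c * ENNReal.ofReal a ^ (m + 1)) • M.Lfun xp) :=
        monotone_of_map_add ℓ (transitionError_le hxp hcon hc m)
    _ = δ + ENNReal.ofReal c * ENNReal.ofReal a ^ (m + 1) * ℓ (M.Lfun xp) := by
        rw [map_add, map_ennreal_smul ℓ ENNReal.coe_ne_top, map_ennreal_smul ℓ (hpow m),
          hℓ.map_one, mul_one]
    _ ≤ ε / 2 + ε / 2 := add_le_add hδ.le hm
    _ = ε := ENNReal.add_halves ε

end TransitionError

section FiniteMemory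

lemma measure_cylSetL_inter_coord (hΛ : HasCylinderWeights Λ fun w => ℓ (M.wordWeight w)) (e : E)
    {m : ℕ} {w : List E} (hw : w.length = m + 1) :
    Λ (cylSetL (-(m : ℤ)) (w.map some) ∩ {σ | σ 1 = some e})
      = ℓ fun x => M.wordWeight w x * ENNReal.ofReal (M.p e (M.actWord w x)) := by
  have hlast : (1 : ℤ) = -(m : ℤ) + (w.map some).length := by
    rw [List.length_map, hw]
    push_cast
    ring
  rw [hlast, ← cylSetL_append_singleton, ← List.map_singleton, ← List.map_append, hΛ]
  exact congrArg ℓ (funext fun x => wordWeight_append_singleton w e x)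

lemma setLIntegral_le_add_map_wordSum [Countable E]
    (hnone : ∀ k : ℤ, Λ {σ | σ k = none} = 0) {n : ℕ} {m : ℤ} {A : Set (CodeSpace E)}
    (hA : ∀ w : List E, w.length = n → cylSetL m (w.map some) ⊆ A ∨
      Disjoint A (cylSetL m (w.map some)))
    {f g : CodeSpace E → ℝ≥0∞} {u v : List E → K → ℝ}
    (hf : ∀ w : List E, w.length = n → ∫⁻ σ in cylSetL m (w.map some), f σ ∂Λ
      = ℓ fun x => M.wordWeight w x * ENNReal.ofReal (u w x))
    (hg : ∀ w : List E, w.length = n → ∫⁻ σ in cylSetL m (w.map some), g σ ∂Λ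
      = ℓ fun x => M.wordWeight w x * ENNReal.ofReal (v w x)) :
    ∫⁻ σ in A, f σ ∂Λ ≤ ∫⁻ σ in A, g σ ∂Λ
      + ℓ fun x => wordSum n fun w => M.wordWeight w x * ENNReal.ofReal |u w x - v w x| := by
  refine (setLIntegral_le_add_wordSum hnone hA fun w hw => ?_).trans
    (add_le_add_right (wordSum_map_le ℓ n _) _)
  rw [hf w hw, hg w hw, ← map_add]
  refine monotone_of_map_add ℓ fun x => ?_
  rw [Pi.add_apply, ← mul_add]
  refine mul_le_mul_right (le_trans ?_ ENNReal.ofReal_add_le) _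
  exact ENNReal.ofReal_le_ofReal (sub_le_iff_le_add'.1 (le_abs_self _))

lemma tendsto_setLIntegral_p_orbit [Countable E] [IsProbabilityMeasure Λ]
    (hℓ : M.IsInvariantMean ℓ) (hΛ : HasCylinderWeights Λ fun w => ℓ (M.wordWeight w)) {e : E}
    (herror : Tendsto (fun m => ℓ (M.transitionError j0 xp e m)) atTop (𝓝 0))
    {A : Set (CodeSpace E)} (hA : ∀ᶠ m : ℕ in atTop, ∀ w : List E, w.length = m + 1 →
      cylSetL (-(m : ℤ)) (w.map some) ⊆ A ∨ Disjoint A (cylSetL (-(m : ℤ)) (w.map some))) :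
    Tendsto (fun m => ∫⁻ σ in A, ENNReal.ofReal (M.p e (M.orbit j0 xp σ m)) ∂Λ) atTop
      (𝓝 (Λ (A ∩ {σ | σ 1 = some e}))) := by
  have hnone := hΛ.measure_coord_none hℓ.isStationaryWeight
  have hmeasure (B : Set (CodeSpace E)) : ∫⁻ σ in B, {σ | σ 1 = some e}.indicator 1 σ ∂Λ
      = Λ (B ∩ {σ | σ 1 = some e}) := by
    rw [lintegral_indicator_one (measurableSet_coord 1 (some e)),
      Measure.restrict_apply (measurableSet_coord 1 (some e)), Set.inter_comm]
  have hedge {m : ℕ} (w : List E) (hw : w.length = m + 1) :=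
    (hmeasure (cylSetL (-(m : ℤ)) (w.map some))).trans (measure_cylSetL_inter_coord hΛ e hw)
  have horbit {m : ℕ} (w : List E) (hw : w.length = m + 1) :
      ∫⁻ σ in cylSetL (-(m : ℤ)) (w.map some), ENNReal.ofReal (M.p e (M.orbit j0 xp σ m)) ∂Λ
        = ℓ fun x => M.wordWeight w x * ENNReal.ofReal (M.p e (M.orbWord j0 xp w)) :=
    setLIntegral_cylSetL_eq hΛ (fun σ hσ => by rw [orbit_eq_orbWord hw hσ]) ENNReal.ofReal_ne_top
  rw [← hmeasure]
  refine tendsto_of_tendsto_of_tendsto_of_le_of_le'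
    (by simpa using ENNReal.Tendsto.sub tendsto_const_nhds herror (Or.inr ENNReal.zero_ne_top))
    (by simpa using tendsto_const_nhds.add herror) ?_ ?_
  · filter_upwards [hA] with m hm
    exact tsub_le_iff_right.2 (setLIntegral_le_add_map_wordSum hnone hm hedge horbit)
  · filter_upwards [hA] with m hm
    refine (setLIntegral_le_add_map_wordSum hnone hm horbit hedge).trans_eq ?_
    simp_rw [abs_sub_comm (M.p e (M.orbWord j0 xp _))]
    rfl

end FiniteMemory

section EdgeDensity

/-- The bi-infinite words whose letter at time `0` ends in the vertex `j`; on the path space this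
is the set `T_j`. -/
def endSet (M : MarkovSystem K N E) (j : N) : Set (CodeSpace E) :=
  {σ | ∃ e, σ 0 = some e ∧ M.t e = j}

lemma mem_endSet_iff {σ : CodeSpace E} {e : E} (h : σ 0 = some e) {j : N} :
    σ ∈ M.endSet j ↔ M.t e = j := by
  simp [endSet, h]

lemma measurableSet_endSet [Countable E] (j : N) :
    MeasurableSet[pastAlgebra E] (M.endSet j) := by
  refine (@measurableSet_setOfPred _ (pastAlgebra E) _).2 (measurable_pastAlgebra 0 ?_)
  intro σ τ h
  have h0 : σ 0 = τ 0 := by simpa using h 0 le_rfl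
  rw [h0]

/-- The version of the asymptotic transition probability `(p̄_e ∘ F)·1_{T_{i(e)}}` which is
measurable with respect to the past. -/
noncomputable def edgeDensity (M : MarkovSystem K N E) (j0 : N) (xp : N → K) (pbar : E → K → ℝ)
    (e : E) : CodeSpace E → ℝ :=
  (M.endSet (M.i e)).indicator fun σ => pbar e (M.limCode j0 xp σ)

lemma pbar_mem_Icc (hpbar : M.IsUCExtensionP pbar) (e : E) (x : K) : pbar e x ∈ Set.Icc 0 1 := by
  by_cases hx : x ∈ closure (M.Kset (M.i e))
  · have hmaps : Set.MapsTo (pbar e) (M.Kset (M.i e)) (Set.Icc 0 1) := fun y hy => by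
      rw [(hpbar e).2.1 y hy]
      exact ⟨M.p_nonneg _ _, M.p_le_one _ _⟩
    simpa only [isClosed_Icc.closure_eq] using hmaps.closure_of_continuousOn (hpbar e).1 hx
  · rw [(hpbar e).2.2 x hx]
    exact Set.left_mem_Icc.2 zero_le_one

lemma measurable_pbar [BorelSpace K] (hpbar : M.IsUCExtensionP pbar) (e : E) :
    Measurable (pbar e) := by
  have hpiecewise : pbar e = (closure (M.Kset (M.i e))).piecewise (pbar e) fun _ => 0 := by
    ext x
    by_cases hx : x ∈ closure (M.Kset (M.i e))
    · simp [hx]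
    · simp [hx, (hpbar e).2.2 x hx]
  rw [hpiecewise]
  exact (hpbar e).1.measurable_piecewise continuousOn_const isClosed_closure.measurableSet

lemma edgeDensity_mem_Icc (hpbar : M.IsUCExtensionP pbar) (e : E) (σ : CodeSpace E) :
    M.edgeDensity j0 xp pbar e σ ∈ Set.Icc 0 1 := by
  by_cases hσ : σ ∈ M.endSet (M.i e)
  · simpa only [edgeDensity, Set.indicator_of_mem hσ] using pbar_mem_Icc hpbar e _
  · simp [edgeDensity, hσ]

lemma tendsto_p_orbit (hxp : ∀ j, xp j ∈ M.Kset j) (hpbar : M.IsUCExtensionP pbar) (e : E)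
    {σ : CodeSpace E} (hσ : σ ∈ M.codeDomain j0 xp) :
    Tendsto (fun m => M.p e (M.orbit j0 xp σ m)) atTop (𝓝 (M.edgeDensity j0 xp pbar e σ)) := by
  obtain ⟨e₀, _, h₀, _⟩ := hσ.1 0
  have hmem := orbit_mem (j0 := j0) hxp hσ.1 h₀
  by_cases he : M.t e₀ = M.i e
  · rw [edgeDensity, Set.indicator_of_mem ((mem_endSet_iff h₀).2 he)]
    rw [he] at hmem
    have hclosure : M.limCode j0 xp σ ∈ closure (M.Kset (M.i e)) :=
      mem_closure_of_tendsto (tendsto_limCode hσ) (Eventually.of_forall hmem)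
    refine (((hpbar e).1 _ hclosure).tendsto.comp (tendsto_nhdsWithin_iff.2
      ⟨tendsto_limCode hσ, Eventually.of_forall fun m => subset_closure (hmem m)⟩)).congr ?_
    exact fun m => (hpbar e).2.1 _ (hmem m)
  · rw [edgeDensity, Set.indicator_of_notMem fun h => he ((mem_endSet_iff h₀).1 h)]
    refine tendsto_const_nhds.congr fun m => (M.p_zero_outside e _ fun h => ?_).symm
    exact he (eq_of_mem_Kset (hmem m) h)

variable [Countable E] [CompleteSpace K]

lemma edgeDensity_ae_eq [IsProbabilityMeasure Λ] (hD : Λ (M.codeDomain j0 xp) = 1) (e : E) :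
    (M.Tset (M.i e)).indicator (fun σ => pbar e (M.code j0 xp σ))
      =ᵐ[Λ] M.edgeDensity j0 xp pbar e := by
  filter_upwards [ae_mem_codeDomain hD] with σ hσ
  have hT : σ ∈ M.Tset (M.i e) ↔ σ ∈ M.endSet (M.i e) := and_iff_right hσ.1
  simp only [edgeDensity, Set.indicator, hT, code_eq_limCode hσ]

variable [BorelSpace K]

lemma measurable_edgeDensity (hpbar : M.IsUCExtensionP pbar) (e : E) :
    Measurable[pastAlgebra E] (M.edgeDensity j0 xp pbar e) :=
  ((measurable_pbar hpbar e).comp measurable_limCode_past).indicator (measurableSet_endSet _)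

lemma isAsymptotic_iff_edgeDensity [IsProbabilityMeasure Λ] (hpbar : M.IsUCExtensionP pbar)
    (hS : Λ.map (shiftMap E) = Λ) (hD : Λ (M.codeDomain j0 xp) = 1) :
    M.IsAsymptotic j0 xp pbar Λ ↔ ∀ e s, MeasurableSet[pastAlgebra E] s →
      Λ (s ∩ {σ | σ 1 = some e})
        = ∫⁻ σ in s, ENNReal.ofReal (M.edgeDensity j0 xp pbar e σ) ∂Λ := by
  have hcond (e : E) := condExp_coord_ae_eq_iff e (measurable_edgeDensity hpbar e)
    (edgeDensity_mem_Icc hpbar e) (edgeDensity_ae_eq hD e)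
  exact ⟨fun h e => (hcond e).1 (h.2.2.2 e),
    fun h => ⟨inferInstance, hS, hD, fun e => (hcond e).2 (h e)⟩⟩

lemma measure_inter_coord_eq [IsProbabilityMeasure Λ] (hℓ : M.IsInvariantMean ℓ)
    (hΛ : HasCylinderWeights Λ fun w => ℓ (M.wordWeight w)) (hxp : ∀ j, xp j ∈ M.Kset j)
    (hpbar : M.IsUCExtensionP pbar) (hD : Λ (M.codeDomain j0 xp) = 1) {e : E}
    (herror : Tendsto (fun m => ℓ (M.transitionError j0 xp e m)) atTop (𝓝 0))
    {s : Set (CodeSpace E)} (hs : MeasurableSet[pastAlgebra E] s) :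
    Λ (s ∩ {σ | σ 1 = some e}) = ∫⁻ σ in s, ENNReal.ofReal (M.edgeDensity j0 xp pbar e σ) ∂Λ := by
  have hfinite {A : Set (CodeSpace E)} (hAm : MeasurableSet A)
      (hA : ∀ᶠ m : ℕ in atTop, ∀ w : List E, w.length = m + 1 →
        cylSetL (-(m : ℤ)) (w.map some) ⊆ A ∨ Disjoint A (cylSetL (-(m : ℤ)) (w.map some))) :
      Λ.restrict {σ | σ 1 = some e} A
        = Λ.withDensity (fun σ => ENNReal.ofReal (M.edgeDensity j0 xp pbar e σ)) A := by
    rw [Measure.restrict_apply hAm, withDensity_apply _ hAm]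
    refine tendsto_nhds_unique (tendsto_setLIntegral_p_orbit hℓ hΛ herror hA)
      (tendsto_lintegral_of_dominated_convergence 1 (fun m => ?_)
        (fun m => ae_of_all _ fun σ => ENNReal.ofReal_le_one.2 (M.p_le_one _ _)) (by simp) ?_)
    · exact (M.measurable_ofReal_p e).comp
        ((stronglyMeasurable_orbit m).measurable.mono pastAlgebra_le le_rfl)
    · filter_upwards [ae_restrict_of_ae (ae_mem_codeDomain hD)] with σ hσ
      exact ENNReal.tendsto_ofReal (tendsto_p_orbit hxp hpbar e hσ)
  rw [← Measure.restrict_apply (pastAlgebra_le _ hs), ← withDensity_apply _ (pastAlgebra_le _ hs)]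
  refine measure_eq_of_cylSetL_past (fun n es hes => ?_) ?_ hs
  · refine hfinite (measurableSet_cylSetL _ _) (eventually_atTop.2 ⟨n, fun m hm w hw => ?_⟩)
    exact cylSetL_subset_or_disjoint hm hes (by simpa using hw)
  · exact hfinite MeasurableSet.univ
      (Eventually.of_forall fun m w _ => Or.inl (Set.subset_univ _))

theorem exists_isAsymptotic_of_conditionT [Countable N] (hxp : ∀ j, xp j ∈ M.Kset j)
    (ha : a < 1) (hcon : M.IsContractive a) (huc : M.IsUniformlyContinuous)
    (hb : M.bConst xp ≠ ⊤) (hpbar : M.IsUCExtensionP pbar) (hdom : M.HasDominatingChain) {x₀ : K}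
    (hT : M.ConditionT x₀) : ∃ Λ, M.IsAsymptotic j0 xp pbar Λ := by
  have hℓ := isInvariantMean_cesaroLim hdom hT
  have hL := cesaroLim_Lfun_ne_top hxp hcon ha hb x₀
  obtain ⟨Λ, hprob, hΛ⟩ := hℓ.isStationaryWeight.exists_measure
  have hD : Λ (M.codeDomain j0 xp) = 1 := measure_codeDomain hℓ hΛ hxp hcon ha hb hL
  exact ⟨Λ, (isAsymptotic_iff_edgeDensity hpbar (hΛ.map_shiftMap hℓ.isStationaryWeight) hD).2
    fun e s hs => measure_inter_coord_eq hℓ hΛ hxp hpbar hD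
      (hℓ.tendsto_transitionError hxp hcon ha huc hL e) hs⟩

end EdgeDensity

end MarkovSystem

/-! ### From asymptotic states to equilibrium states -/

namespace MarkovSystem

variable {K : Type*} [MetricSpace K] [MeasurableSpace K] {N E : Type*} {M : MarkovSystem K N E}
  {j0 : N} {xp : N → K} {Λ : Measure (CodeSpace E)} {pbar : E → K → ℝ}

/-- The bi-infinite words whose coded point lies in the vertex set at which their letter at time
`0` ends. -/
def regularSet (M : MarkovSystem K N E) (j0 : N) (xp : N → K) : Set (CodeSpace E) :=
  ⋃ j, M.endSet j ∩ M.limCode j0 xp ⁻¹' M.Kset j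

lemma edgeDensity_eq_of_mem_regularSet (hpbar : M.IsUCExtensionP pbar) (e : E) {σ : CodeSpace E}
    (hσ : σ ∈ M.regularSet j0 xp) :
    M.edgeDensity j0 xp pbar e σ = M.p e (M.limCode j0 xp σ) := by
  obtain ⟨_, ⟨e₀, h₀, rfl⟩, hK⟩ := Set.mem_iUnion.1 hσ
  by_cases he : M.t e₀ = M.i e
  · rw [edgeDensity, Set.indicator_of_mem ((mem_endSet_iff h₀).2 he),
      (hpbar e).2.1 _ (he ▸ hK)]
  · rw [edgeDensity, Set.indicator_of_notMem fun h => he ((mem_endSet_iff h₀).1 h),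
      M.p_zero_outside e _ fun h => he (eq_of_mem_Kset hK h)]

lemma shiftMap_mem_regularSet (hxp : ∀ j, xp j ∈ M.Kset j) (huc : M.IsUniformlyContinuous)
    {σ : CodeSpace E} (hσ : σ ∈ M.codeDomain j0 xp) (hreg : σ ∈ M.regularSet j0 xp) :
    shiftMap E σ ∈ M.regularSet j0 xp := by
  obtain ⟨_, ⟨e₀, h₀, rfl⟩, hK⟩ := Set.mem_iUnion.1 hreg
  obtain ⟨e, e₁, h, h₁, hadj⟩ := hσ.1 0
  obtain rfl : e₀ = e := Option.some_injective _ (h₀.symm.trans h)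
  have hK₁ : M.limCode j0 xp σ ∈ M.Kset (M.i e₁) := hadj ▸ hK
  refine Set.mem_iUnion.2 ⟨M.t e₁, ⟨e₁, h₁, rfl⟩, ?_⟩
  rw [Set.mem_preimage, limCode_shiftMap hxp huc hσ h₁ hK₁]
  exact M.w_mapsTo e₁ hK₁

variable [Countable E] [CompleteSpace K]

lemma measure_regularSet_ne_zero [IsProbabilityMeasure Λ] (hD : Λ (M.codeDomain j0 xp) = 1)
    {i : N} (hi : 0 < Λ (M.Tset i ∩ M.code j0 xp ⁻¹' M.Kset i)) : Λ (M.regularSet j0 xp) ≠ 0 := by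
  refine (hi.trans_le (measure_mono_ae ?_)).ne'
  filter_upwards [ae_mem_codeDomain hD] with σ hσ
  rintro ⟨⟨_, hend⟩, hcode⟩
  rw [Set.mem_preimage, code_eq_limCode hσ] at hcode
  exact Set.mem_iUnion.2 ⟨i, hend, hcode⟩

variable [BorelSpace K] [Countable N]

lemma measurableSet_regularSet : MeasurableSet[pastAlgebra E] (M.regularSet j0 xp) :=
  MeasurableSet.iUnion fun j =>
    (measurableSet_endSet j).inter (measurable_limCode_past (M.Kset_measurable j))

lemma regularSet_ae_eq_preimage_shiftMap [IsProbabilityMeasure Λ] (hxp : ∀ j, xp j ∈ M.Kset j)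
    (huc : M.IsUniformlyContinuous) (hS : MeasurePreserving (shiftMap E) Λ Λ)
    (hD : Λ (M.codeDomain j0 xp) = 1) :
    M.regularSet j0 xp =ᵐ[Λ] shiftMap E ⁻¹' M.regularSet j0 xp := by
  have hmeas : NullMeasurableSet (M.regularSet j0 xp) Λ :=
    (pastAlgebra_le _ measurableSet_regularSet).nullMeasurableSet
  refine ae_eq_of_ae_subset_of_measure_ge ?_ (hS.measure_preimage hmeas).le hmeas
    (measure_ne_top _ _)
  filter_upwards [ae_mem_codeDomain hD] with σ hσ
  exact shiftMap_mem_regularSet hxp huc hσ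

lemma IsAsymptotic.isEquilibrium_cond (hΛ : M.IsAsymptotic j0 xp pbar Λ)
    (hxp : ∀ j, xp j ∈ M.Kset j) (huc : M.IsUniformlyContinuous) (hpbar : M.IsUCExtensionP pbar)
    (hreg : Λ (M.regularSet j0 xp) ≠ 0) :
    M.IsEquilibrium j0 xp (ProbabilityTheory.cond Λ (M.regularSet j0 xp)) := by
  obtain ⟨hprob, hS, hD, -⟩ := id hΛ
  have hdensity := (isAsymptotic_iff_edgeDensity hpbar hS hD).1 hΛ
  have hpres : MeasurePreserving (shiftMap E) Λ Λ := ⟨measurable_shiftMap, hS⟩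
  have hcond := ProbabilityTheory.cond_isProbabilityMeasure hreg
  have hD' : ∀ᵐ σ ∂ProbabilityTheory.cond Λ (M.regularSet j0 xp), σ ∈ M.codeDomain j0 xp :=
    ProbabilityTheory.cond_absolutelyContinuous.ae_le (ae_mem_codeDomain hD)
  refine ⟨hcond, ?_, (mem_ae_iff_prob_eq_one measurableSet_codeDomain).1 hD', fun e => ?_⟩
  · exact (measurePreserving_cond hpres (pastAlgebra_le _ measurableSet_regularSet)
      (regularSet_ae_eq_preimage_shiftMap hxp huc hpres hD)).map_eq
  · refine (condExp_coord_ae_eq_iff e ((M.p_measurable e).comp measurable_limCode_past)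
      (fun σ => ⟨M.p_nonneg e _, M.p_le_one e _⟩)
      (hD'.mono fun σ hσ => congrArg (M.p e) (code_eq_limCode hσ))).2 fun s hs => ?_
    exact cond_inter_eq_setLIntegral pastAlgebra_le measurableSet_regularSet (hdensity e)
      (fun σ hσ => congrArg ENNReal.ofReal (edgeDensity_eq_of_mem_regularSet hpbar e hσ)) hs

end MarkovSystem

/-- If `M` is contractive with rate `0 < a < 1`, uniformly continuous,
non-degenerate, with `b < ∞` and a dominating Markov chain, then `E(M)` is nonempty iff
Condition (T) holds at some `x₀ ∈ K`. -/
theorem equilibrium_nonempty_iff_conditionT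
    (M : MarkovSystem K N E) (j0 : N) (xp : N → K) (hxp : ∀ j, xp j ∈ M.Kset j)
    (a : ℝ) (ha0 : 0 < a) (ha1 : a < 1) (hcon : M.IsContractive a)
    (huc : M.IsUniformlyContinuous) (hb : M.bConst xp ≠ ⊤)
    (pbar : E → K → ℝ) (hpbar : M.IsUCExtensionP pbar)
    (hnd : M.IsNonDegenerate j0 xp pbar)
    (hdom : M.HasDominatingChain) :
    (∃ Λ : Measure (CodeSpace E), M.IsEquilibrium j0 xp Λ) ↔ ∃ x0 : K, M.ConditionT x0 := by
  constructor
  · rintro ⟨Λ, hΛ⟩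
    exact hΛ.exists_conditionT hxp huc
  · rintro ⟨x₀, hT⟩
    obtain ⟨Λ, hΛ⟩ : ∃ Λ, M.IsAsymptotic j0 xp pbar Λ :=
      MarkovSystem.exists_isAsymptotic_of_conditionT hxp ha1 hcon huc hb hpbar hdom hT
    obtain ⟨i, hi⟩ := hnd Λ hΛ
    have : IsProbabilityMeasure Λ := hΛ.1
    have hreg : Λ (M.regularSet j0 xp) ≠ 0 := MarkovSystem.measure_regularSet_ne_zero hΛ.2.2.1 hi
    exact ⟨_, hΛ.isEquilibrium_cond hxp huc hpbar hreg⟩
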